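/- Let Φ = B_n, let I ⊆ Δ, and let λ ∈ Λ_I⁺. Then Σ_{β∈Ψ_λ⁺} θ(s_βλ) = 0 in the free ℤ-module on h* if and only if every element of Ψ_λ⁺⁺ is of one of the following forms: (1) β = e_i or β = e_i + e_j with q_{s−1} < i ≤ q_s ≤ q_{m−1} < j ≤ n for some 1 ≤ s < m, where λ_i = λ_j ∈ (1/2)ℤ_{>0} and λ_k ∉ {0, −λ_i} for all q_{s−1} < k ≤ q_s; (2) β = e_i or β = e_i + e_j with q_{s−1} < i < j ≤ q_s for some 1 ≤ s < m, where λ_i ∈ ℤ_{>0}, λ_j = 0, λ_k ≠ −λ_i for all q_{s−1} < k ≤ q_s, and λ_l ≠ λ_i for all q_{m−1} < l ≤ n. -/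

import Mathlib

open scoped RealInnerProductSpace
open Classical

noncomputable section

namespace JantzenGVM

variable {V : Type*} [NormedAddCommGroup V] [InnerProductSpace ℝ V] [FiniteDimensional ℝ V]

/-- The coroot `α^∨ = 2α/⟨α,α⟩` of a vector `α` (junk value `0` when `α = 0`). -/
def coroot (α : V) : V := (2 / ⟪α, α⟫) • α

/-- The linear functional `v ↦ ⟨v, α^∨⟩`. -/
def corootForm (α : V) : V →ₗ[ℝ] ℝ where
  toFun v := ⟪v, coroot α⟫
  map_add' x y := by simp [inner_add_left]
  map_smul' c x := by simp [inner_smul_left]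

lemma corootForm_self {α : V} (h : ⟪α, α⟫ ≠ 0) : corootForm α α = 2 := by
  simp only [corootForm, coroot, LinearMap.coe_mk, AddHom.coe_mk, real_inner_smul_right]
  field_simp

/-- The reflection `s_α` as a linear automorphism of `V` (the identity when `⟨α,α⟩ = 0`). -/
def reflV (α : V) : V ≃ₗ[ℝ] V :=
  if h : ⟪α, α⟫ = 0 then LinearEquiv.refl ℝ V
  else Module.reflection (corootForm_self h)

/-- `h* = ℂ ⊗ V`, realized as the space of real-linear functionals `V → ℂ` via the
inner product; an element `λ` pairs with a root `α` by `⟨λ, α⟩ = λ α` and with the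
coroot by `⟨λ, α^∨⟩ = λ (coroot α)`. -/
abbrev HStar (V : Type*) [NormedAddCommGroup V] [InnerProductSpace ℝ V] := V →ₗ[ℝ] ℂ

/-- The canonical embedding of `V` into `h*`. -/
def emb (α : V) : HStar V where
  toFun v := (⟪α, v⟫ : ℂ)
  map_add' x y := by simp [inner_add_right]
  map_smul' c x := by simp [inner_smul_right, Complex.real_smul]

/-- The action of a linear automorphism `w` of `V` on `h*`: `(w • λ)(v) = λ(w⁻¹ v)`. -/
def wAct (w : V ≃ₗ[ℝ] V) (l : HStar V) : HStar V := l ∘ₗ (w.symm : V →ₗ[ℝ] V)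

/-- The reflection `s_β λ = λ - ⟨λ, β^∨⟩ β` acting on `h*`. -/
def sRefl (β : V) (l : HStar V) : HStar V := l - l (coroot β) • emb β

/-- The group generated by the reflections in the elements of `Φ'`. -/
def weyl (Φ' : Set V) : Subgroup (V ≃ₗ[ℝ] V) :=
  Subgroup.closure {w | ∃ α ∈ Φ', w = reflV α}

/-- A finite, reduced, crystallographic root system spanning the Euclidean space `V`,
together with a choice of positive system and the corresponding simple system. -/
structure RootSys (V : Type*) [NormedAddCommGroup V] [InnerProductSpace ℝ V]
    [FiniteDimensional ℝ V] where
  Φ : Finset V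
  pos : Finset V
  Δ : Finset V
  ne_zero : ∀ α ∈ Φ, α ≠ (0 : V)
  span_eq_top : Submodule.span ℝ (Φ : Set V) = ⊤
  reduced : ∀ α ∈ Φ, ∀ c : ℝ, c • α ∈ Φ → c = 1 ∨ c = -1
  refl_mem : ∀ α ∈ Φ, ∀ β ∈ Φ, reflV α β ∈ Φ
  crystallographic : ∀ α ∈ Φ, ∀ β ∈ Φ, ∃ n : ℤ, ⟪β, coroot α⟫ = (n : ℝ)
  pos_subset : pos ⊆ Φ
  mem_pos_or : ∀ α ∈ Φ, α ∈ pos ∨ -α ∈ pos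
  not_both : ∀ α ∈ pos, -α ∉ pos
  simple_subset : Δ ⊆ pos
  simple_indep : LinearIndependent ℝ (fun x : {a : V // a ∈ Δ} => x.1)
  simple_gen : ∀ β ∈ pos, ∃ c : V → ℝ, (∀ α ∈ Δ, 0 ≤ c α) ∧ β = ∑ α ∈ Δ, c α • α

/-- A subsystem of the root system: a subset of `Φ` closed under its own reflections. -/
def IsSubsystem (S : RootSys V) (Φ' : Set V) : Prop :=
  Φ' ⊆ (S.Φ : Set V) ∧ ∀ α ∈ Φ', ∀ β ∈ Φ', reflV α β ∈ Φ'

/-- The length of `w`, i.e. the number of positive roots sent to negative roots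
(this equals the Coxeter length for elements of the Weyl group). -/
def len (S : RootSys V) (w : V ≃ₗ[ℝ] V) : ℕ :=
  {β ∈ (S.pos : Set V) | w β ∉ (S.pos : Set V)}.ncard

/-- `Φ_I = ℤI ∩ Φ`, the subsystem generated by a subset `I` of the simple roots. -/
def PhiI (S : RootSys V) (I : Finset V) : Set V :=
  {α ∈ (S.Φ : Set V) | α ∈ Submodule.span ℤ (I : Set V)}

/-- `z` is a positive integer. -/
def IsPosInt (z : ℂ) : Prop := ∃ n : ℤ, 0 < n ∧ z = (n : ℂ)

/-- `z` is an integer. -/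
def IsInt (z : ℂ) : Prop := ∃ n : ℤ, z = (n : ℂ)

/-- `Λ_I⁺ = {λ ∈ h* : ⟨λ, α^∨⟩ ∈ ℤ_{>0} for all α ∈ I}`. -/
def LambdaP (I : Set V) : Set (HStar V) :=
  {l | ∀ α ∈ I, IsPosInt (l (coroot α))}

/-- `Λ⁺(Φ'', Φ') = {ν ∈ ℂΦ' : ⟨ν, α^∨⟩ ∈ ℤ_{>0} for all α ∈ Φ'' ∩ Φ⁺}`. -/
def LambdaPSub (S : RootSys V) (Φ'' Φ' : Set V) : Set (HStar V) :=
  {l | l ∈ Submodule.span ℂ (emb '' Φ') ∧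
       ∀ α ∈ Φ'' ∩ (S.pos : Set V), IsPosInt (l (coroot α))}

/-- `λ` is `Φ''`-regular: `⟨λ, α⟩ ≠ 0` for all `α ∈ Φ''`. -/
def IsRegularOn (Φ'' : Set V) (l : HStar V) : Prop := ∀ α ∈ Φ'', l α ≠ 0

/-- `Ψ⁺(λ, Φ'', Φ') = {β ∈ (Φ' ∩ Φ⁺) \ Φ'' : ⟨λ, β^∨⟩ ∈ ℤ_{>0}}`. -/
def PsiP (S : RootSys V) (Φ'' Φ' : Set V) (l : HStar V) : Set V :=
  {β | β ∈ Φ' ∩ (S.pos : Set V) ∧ β ∉ Φ'' ∧ IsPosInt (l (coroot β))}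

/-- `Ψ⁺⁺(λ, Φ'', Φ') = {β ∈ Ψ⁺(λ, Φ'', Φ') : s_β λ is Φ''-regular}`. -/
def PsiPP (S : RootSys V) (Φ'' Φ' : Set V) (l : HStar V) : Set V :=
  {β ∈ PsiP S Φ'' Φ' l | ∀ α ∈ Φ'', (sRefl β l) α ≠ 0}

/-- The sign function: `sgn(λ, μ) = (-1)^{ℓ(w)}` if `λ, μ` are `Φ''`-regular and
`μ = wλ` for some `w ∈ W(Φ'')`, and `0` otherwise. -/
def sgnW (S : RootSys V) (Φ'' : Set V) (l m : HStar V) : ℤ :=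
  if h : IsRegularOn Φ'' l ∧ IsRegularOn Φ'' m ∧ ∃ w, w ∈ weyl Φ'' ∧ m = wAct w l
  then (-1) ^ len S h.2.2.choose else 0

/-- The Jantzen coefficient `c(λ, μ, Φ'', Φ') = Σ_{β ∈ Ψ⁺⁺(λ,Φ'',Φ')} sgn(s_β λ, μ)`. -/
def jc (S : RootSys V) (Φ'' Φ' : Set V) (l m : HStar V) : ℤ :=
  ∑ᶠ β ∈ PsiPP S Φ'' Φ' l, sgnW S Φ'' (sRefl β l) m

/-- The symmetrized Jantzen coefficient `c̃(λ, μ, Φ'', Φ')`. -/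
def jcSym (S : RootSys V) (Φ'' Φ' : Set V) (l m : HStar V) : ℤ :=
  jc S Φ'' Φ' l m + jc S Φ'' Φ' m l

/-- `θ(λ) = Σ_{w ∈ W_I} (-1)^{ℓ(w)} e^{wλ}` in the free `ℤ`-module on `h*`. -/
def theta (S : RootSys V) (I : Finset V) (l : HStar V) : HStar V →₀ ℤ :=
  ∑ᶠ w ∈ (weyl (PhiI S I) : Set (V ≃ₗ[ℝ] V)),
    Finsupp.single (wAct w l) ((-1) ^ len S w)

/-- `Φ_λ = {α ∈ Φ : ⟨λ, α⟩ = 0}`. -/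
def singSet (S : RootSys V) (l : HStar V) : Set V :=
  {α ∈ (S.Φ : Set V) | l α = 0}

/-- `Φ_{[λ]} = {α ∈ Φ : ⟨λ, α^∨⟩ ∈ ℤ}`. -/
def integralSet (S : RootSys V) (l : HStar V) : Set V :=
  {α ∈ (S.Φ : Set V) | IsInt (l (coroot α))}

/-- `(ℚ A) ∩ Φ`, the intersection of the rational span of `A` with `Φ`.
Taking `A = Φ_I ∪ {β}` gives `Φ_{β,1}`; taking `A = Φ_λ ∪ {β}` gives `Φ_{β,2}`. -/
def ratSpanRoots (S : RootSys V) (A : Set V) : Set V :=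
  {γ ∈ (S.Φ : Set V) | ∃ (t : Finset V) (c : V → ℚ),
    (t : Set V) ⊆ A ∧ γ = ∑ α ∈ t, (c α : ℝ) • α}

/-- `Φ_{β,0}`, the irreducible component of `Φ` containing `β`. -/
def component (S : RootSys V) (β : V) : Set V :=
  {γ ∈ (S.Φ : Set V) |
    Relation.ReflTransGen
      (fun x y => x ∈ (S.Φ : Set V) ∧ y ∈ (S.Φ : Set V) ∧ ⟪x, y⟫ ≠ 0) β γ}

/-- `λ|_{Φ'}`: the unique element of `ℂΦ'` with `⟨λ|_{Φ'}, α^∨⟩ = ⟨λ, α^∨⟩`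
for all `α ∈ Φ'`. -/
def restrictW (Φ' : Set V) (l : HStar V) : HStar V :=
  letI : Nonempty (HStar V) := ⟨0⟩
  Classical.epsilon fun m =>
    m ∈ Submodule.span ℂ (emb '' Φ') ∧ ∀ α ∈ Φ', m (coroot α) = l (coroot α)

/-- `ᴵWᴶ = {w ∈ W : ℓ(uwv) = ℓ(u) + ℓ(w) + ℓ(v) for all u ∈ W_I, v ∈ W_J}`. -/
def doubleCoset (S : RootSys V) (I J : Finset V) : Set (V ≃ₗ[ℝ] V) :=
  {w | w ∈ weyl (S.Φ : Set V) ∧ ∀ u ∈ weyl (PhiI S I), ∀ v ∈ weyl (PhiI S J),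
    len S (u * w * v) = len S u + len S w + len S v}

/-- The fundamental weight `ϖ_j` relative to an enumeration `e` of the simple roots:
the unique element of `h*` with `⟨ϖ_j, α_k^∨⟩ = δ_{jk}`. -/
def fundWeight {n : ℕ} (e : Fin n → V) (j : Fin n) : HStar V :=
  letI : Nonempty (HStar V) := ⟨0⟩
  Classical.epsilon fun m => ∀ k : Fin n, m (coroot (e k)) = if k = j then 1 else 0

/-- The labels of the irreducible Dynkin types. -/
inductive LieType | A | B | C | D | E | F | G
deriving DecidableEq

/-- The Cartan matrix of type `A_n` (1-based indices): entry `(i,j)` is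
`⟨α_i, α_j^∨⟩`. -/
def cartanA (i j : ℕ) : ℤ :=
  if i = j then 2 else if i + 1 = j ∨ j + 1 = i then -1 else 0

/-- The Cartan matrices of the irreducible types in the standard (Bourbaki/Humphreys)
numbering of the Dynkin diagram: `cartanEntry t n i j = ⟨α_i, α_j^∨⟩` (1-based). -/
def cartanEntry : LieType → ℕ → ℕ → ℕ → ℤ
  | .A, _, i, j => cartanA i j
  | .B, n, i, j => if i + 1 = n ∧ j = n then -2 else cartanA i j
  | .C, n, i, j => if i = n ∧ j + 1 = n then -2 else cartanA i j
  | .D, n, i, j =>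
      if i = j then 2
      else if (i + 2 = n ∧ j = n) ∨ (i = n ∧ j + 2 = n) then -1
      else if (i + 1 = n ∧ j = n) ∨ (i = n ∧ j + 1 = n) then 0
      else cartanA i j
  | .E, _, i, j =>
      if i = j then 2
      else if (i = 1 ∧ j = 3) ∨ (i = 3 ∧ j = 1) ∨ (i = 2 ∧ j = 4) ∨ (i = 4 ∧ j = 2) then -1
      else if (i = 1 ∧ j = 2) ∨ (i = 2 ∧ j = 1) ∨ (i = 2 ∧ j = 3) ∨ (i = 3 ∧ j = 2) then 0
      else cartanA i j
  | .F, _, i, j => if i = 2 ∧ j = 3 then -2 else cartanA i j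
  | .G, _, i, j => if i = 2 ∧ j = 1 then -3 else cartanA i j

/-- The standard basis vector `e_k` (1-based index, junk `0` outside `1 ≤ k ≤ n`). -/
def stdE (n k : ℕ) : EuclideanSpace ℝ (Fin n) :=
  if h : 1 ≤ k ∧ k ≤ n then EuclideanSpace.single ⟨k - 1, by omega⟩ 1 else 0

/-- The labels `B`, `C`, `D` of the classical non-`A` types. -/
inductive BCD | B | C | D
deriving DecidableEq

/-- The root set of `B_n` / `C_n` / `D_n` in the standard realization. -/
def bcdRoots (t : BCD) (n : ℕ) : Set (EuclideanSpace ℝ (Fin n)) :=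
  {v | (∃ i j : ℕ, 1 ≤ i ∧ i < j ∧ j ≤ n ∧
          (v = stdE n i - stdE n j ∨ v = -(stdE n i - stdE n j) ∨
           v = stdE n i + stdE n j ∨ v = -(stdE n i + stdE n j))) ∨
       (match t with
        | .B => ∃ i : ℕ, 1 ≤ i ∧ i ≤ n ∧ (v = stdE n i ∨ v = -stdE n i)
        | .C => ∃ i : ℕ, 1 ≤ i ∧ i ≤ n ∧ (v = (2:ℝ) • stdE n i ∨ v = -((2:ℝ) • stdE n i))
        | .D => False)}

/-- The positive roots of `B_n` / `C_n` / `D_n` in the standard realization. -/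
def bcdPos (t : BCD) (n : ℕ) : Set (EuclideanSpace ℝ (Fin n)) :=
  {v | (∃ i j : ℕ, 1 ≤ i ∧ i < j ∧ j ≤ n ∧
          (v = stdE n i - stdE n j ∨ v = stdE n i + stdE n j)) ∨
       (match t with
        | .B => ∃ i : ℕ, 1 ≤ i ∧ i ≤ n ∧ v = stdE n i
        | .C => ∃ i : ℕ, 1 ≤ i ∧ i ≤ n ∧ v = (2:ℝ) • stdE n i
        | .D => False)}

/-- The simple roots of `B_n` / `C_n` / `D_n` in the standard realization. -/
def bcdSimple (t : BCD) (n : ℕ) : Set (EuclideanSpace ℝ (Fin n)) :=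
  {v | (∃ i : ℕ, 1 ≤ i ∧ i < n ∧ v = stdE n i - stdE n (i + 1)) ∨
       (match t with
        | .B => v = stdE n n
        | .C => v = (2:ℝ) • stdE n n
        | .D => v = stdE n (n - 1) + stdE n n)}

/-- The simple root `α_k` of `B_n` / `C_n` / `D_n` (1-based index `k`). -/
def bcdAlpha (t : BCD) (n k : ℕ) : EuclideanSpace ℝ (Fin n) :=
  if k < n then stdE n k - stdE n (k + 1)
  else match t with
  | .B => stdE n n
  | .C => (2:ℝ) • stdE n n
  | .D => stdE n (n - 1) + stdE n n



/-! ### General facts on reflections, the sign character and `theta` -/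

lemma reflV_apply (α v : V) : reflV α v = v - ⟪v, coroot α⟫ • α := by
  unfold reflV
  split_ifs with h
  · have : α = 0 := inner_self_eq_zero.mp h
    simp [this]
  · simp [Module.reflection_apply, corootForm]

lemma reflV_reflV (α v : V) : reflV α (reflV α v) = v := by
  unfold reflV
  split_ifs with h
  · simp
  · exact Module.involutive_reflection (corootForm_self h) v

lemma reflV_mul_self (α : V) : reflV α * reflV α = 1 := by
  ext v
  simp [LinearEquiv.mul_apply, reflV_reflV]

lemma reflV_symm_apply (α v : V) : (reflV α).symm v = reflV α v := by
  rw [LinearEquiv.symm_apply_eq, reflV_reflV]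

lemma wAct_reflV (α : V) (l : HStar V) : wAct (reflV α) l = sRefl α l := by
  ext v
  simp only [wAct, LinearMap.comp_apply, LinearEquiv.coe_coe, reflV_symm_apply, reflV_apply, sRefl,
    LinearMap.sub_apply, LinearMap.smul_apply, map_sub, map_smul, emb, LinearMap.coe_mk,
    AddHom.coe_mk]
  simp only [coroot, real_inner_smul_right, map_smul, Complex.real_smul, smul_eq_mul]
  rw [real_inner_comm v α]
  push_cast
  ring

lemma wAct_mul (u w : V ≃ₗ[ℝ] V) (l : HStar V) : wAct (u * w) l = wAct u (wAct w l) := by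
  ext v
  simp [wAct, LinearEquiv.mul_eq_trans]

lemma wAct_one (l : HStar V) : wAct (1 : V ≃ₗ[ℝ] V) l = l := by
  rfl

lemma reflV_self {α : V} (h : α ≠ 0) : reflV α α = -α := by
  have h1 : ⟪α, α⟫ ≠ 0 := fun h' => h (inner_self_eq_zero.mp h')
  rw [reflV_apply]
  have : ⟪α, coroot α⟫ = 2 := corootForm_self h1
  rw [this, two_smul]; abel

lemma reflV_neg (α : V) : reflV (-α) = reflV α := by
  ext v
  simp [reflV_apply, coroot]

/-- the sign of a root -/
def eps (S : RootSys V) (γ : V) : ℤ := if γ ∈ S.pos then 1 else -1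

lemma eps_mul_self (S : RootSys V) (γ : V) : eps S γ * eps S γ = 1 := by
  unfold eps; split_ifs <;> simp

lemma RootSys.neg_mem (S : RootSys V) {γ : V} (h : γ ∈ S.Φ) : -γ ∈ S.Φ := by
  have := S.refl_mem γ h γ h
  rwa [reflV_self (S.ne_zero γ h)] at this

lemma eps_neg (S : RootSys V) {γ : V} (h : γ ∈ S.Φ) : eps S (-γ) = - eps S γ := by
  unfold eps
  by_cases h1 : γ ∈ S.pos
  · simp [h1, S.not_both γ h1]
  · simp [h1, (S.mem_pos_or γ h).resolve_left h1]

lemma sign_len (S : RootSys V) (w : V ≃ₗ[ℝ] V) :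
    (-1 : ℤ) ^ len S w = ∏ β ∈ S.pos, eps S (w β) := by
  have h : {β ∈ (S.pos : Set V) | w β ∉ (S.pos : Set V)}
      = ((S.pos.filter fun β => w β ∉ S.pos : Finset V) : Set V) := by
    ext; simp
  unfold len
  rw [h, Set.ncard_coe_finset]
  simp only [eps]
  rw [Finset.prod_ite]
  simp

/-- the positive one among `γ` and `-γ` -/
def absR (S : RootSys V) (γ : V) : V := if γ ∈ S.pos then γ else -γ

lemma absR_mem (S : RootSys V) {γ : V} (h : γ ∈ S.Φ) : absR S γ ∈ S.pos := by
  unfold absR; split_ifs with h1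
  · exact h1
  · exact (S.mem_pos_or γ h).resolve_left h1

lemma absR_pos (S : RootSys V) {γ : V} (h : γ ∈ S.pos) : absR S γ = γ := by
  simp [absR, h]

lemma absR_neg (S : RootSys V) {γ : V} (h : γ ∈ S.pos) : absR S (-γ) = γ := by
  simp [absR, S.not_both γ h]

lemma absR_refl_absR (S : RootSys V) (α : V) {β : V} (h : β ∈ S.pos) :
    absR S (reflV α (absR S (reflV α β))) = β := by
  by_cases h1 : reflV α β ∈ S.pos
  · rw [absR_pos S h1, reflV_reflV, absR_pos S h]
  · have : absR S (reflV α β) = - reflV α β := by simp [absR, h1]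
    rw [this, map_neg, reflV_reflV, absR_neg S h]

lemma prod_eps_refl (S : RootSys V) {α : V} (hα : α ∈ S.pos) :
    ∏ β ∈ S.pos, eps S (reflV α β) = -1 := by
  have hα' := S.pos_subset hα
  rw [← Finset.mul_prod_erase _ _ hα, reflV_self (S.ne_zero α hα'), eps_neg S hα']
  have h1 : eps S α = 1 := by simp [eps, hα]
  rw [h1]
  have h2 : ∏ β ∈ S.pos.erase α, eps S (reflV α β) = 1 := by
    refine Finset.prod_involution (fun β _ => absR S (reflV α β)) ?_ ?_ ?_ ?_
    · intro β hβ
      have hβ' := S.pos_subset (Finset.mem_of_mem_erase hβ)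
      have hr := S.refl_mem α hα' β hβ'
      by_cases h : reflV α β ∈ S.pos
      · simp only [absR_pos S h, reflV_reflV]
        simp [eps, h, Finset.mem_of_mem_erase hβ]
      · have : absR S (reflV α β) = - reflV α β := by simp [absR, h]
        simp only [this, map_neg, reflV_reflV]
        rw [eps_neg S hβ']
        simp [eps, h, Finset.mem_of_mem_erase hβ]
    · intro β hβ hne heq
      have hβp := Finset.mem_of_mem_erase hβ
      by_cases h : reflV α β ∈ S.pos
      · exact hne (by simp [eps, h])
      · have h3 : absR S (reflV α β) = - reflV α β := by simp [absR, h]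
        rw [h3, reflV_apply] at heq
        have h4 : (⟪β, coroot α⟫ / 2) • α = β := by
          have : (2:ℝ) • β = ⟪β, coroot α⟫ • α := by
            rw [two_smul]; nth_rewrite 1 [← heq]; abel
          rw [div_eq_inv_mul, mul_smul, ← this, smul_smul]; norm_num
        rcases S.reduced α hα' (⟪β, coroot α⟫ / 2) (by rw [h4]; exact S.pos_subset hβp) with h5 | h5
        · rw [h5, one_smul] at h4
          exact (Finset.ne_of_mem_erase hβ) h4.symm
        · rw [h5, neg_smul, one_smul] at h4
          exact S.not_both α hα (by rw [h4]; exact hβp)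
    · intro β hβ
      have hβp := Finset.mem_of_mem_erase hβ
      refine Finset.mem_erase.mpr ⟨?_, absR_mem S (S.refl_mem α hα' β (S.pos_subset hβp))⟩
      intro h
      have := absR_refl_absR S α hβp
      rw [h, reflV_self (S.ne_zero α hα'), absR_neg S hα] at this
      exact Finset.ne_of_mem_erase hβ this.symm
    · intro β hβ
      exact absR_refl_absR S α (Finset.mem_of_mem_erase hβ)
  rw [h2]; norm_num

lemma sign_len_mul_refl (S : RootSys V) {w : V ≃ₗ[ℝ] V} (hw : ∀ β ∈ S.Φ, w β ∈ S.Φ)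
    {α : V} (hα : α ∈ S.Φ) :
    (-1 : ℤ) ^ len S (w * reflV α) = - (-1 : ℤ) ^ len S w := by
  wlog hp : α ∈ S.pos generalizing α
  · have h1 := (S.mem_pos_or α hα).resolve_left hp
    have := this (S.neg_mem hα) h1
    rwa [reflV_neg] at this
  rw [sign_len, sign_len]
  have h1 : ∀ β ∈ S.pos, eps S ((w * reflV α) β)
      = (eps S (w (absR S (reflV α β)))) * eps S (reflV α β) := by
    intro β hβ
    have hr := S.refl_mem α hα β (S.pos_subset hβ)
    rw [LinearEquiv.mul_apply]
    by_cases h : reflV α β ∈ S.pos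
    · rw [absR_pos S h]; simp [eps, h]
    · have : absR S (reflV α β) = - reflV α β := by simp [absR, h]
      rw [this, map_neg, eps_neg S (hw _ hr)]; simp [eps, h]
  rw [Finset.prod_congr rfl h1, Finset.prod_mul_distrib, prod_eps_refl S hp]
  have h2 : ∏ β ∈ S.pos, eps S (w (absR S (reflV α β))) = ∏ β ∈ S.pos, eps S (w β) := by
    refine Finset.prod_nbij' (fun β => absR S (reflV α β)) (fun β => absR S (reflV α β)) ?_ ?_ ?_ ?_ ?_
    · intro β hβ; exact absR_mem S (S.refl_mem α hα β (S.pos_subset hβ))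
    · intro β hβ; exact absR_mem S (S.refl_mem α hα β (S.pos_subset hβ))
    · intro β hβ; exact absR_refl_absR S α hβ
    · intro β hβ; exact absR_refl_absR S α hβ
    · intro β hβ; rfl
  rw [h2]; ring

lemma weyl_pres (S : RootSys V) (I : Finset V) {w : V ≃ₗ[ℝ] V} (hw : w ∈ weyl (PhiI S I)) :
    ∀ β ∈ S.Φ, w β ∈ S.Φ := by
  unfold weyl at hw
  induction hw using Subgroup.closure_induction with
  | mem x hx =>
    obtain ⟨α, hα, rfl⟩ := hx
    exact fun β hβ => S.refl_mem α hα.1 β hβ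
  | one => intro β hβ; simpa using hβ
  | mul x y _ _ hx hy =>
    intro β hβ; rw [LinearEquiv.mul_apply]; exact hx _ (hy _ hβ)
  | inv x _ hx =>
    intro β hβ
    have hinj : Set.InjOn x (S.Φ : Set V) := x.injective.injOn
    have := (Finset.surjOn_of_injOn_of_card_le x (fun b hb => hx b hb) hinj le_rfl) hβ
    obtain ⟨γ, hγ, h⟩ := this
    have : x⁻¹ β = γ := by rw [← h]; exact x.symm_apply_apply γ
    rw [this]; exact hγ

lemma reflV_mem_weyl (S : RootSys V) (I : Finset V) {α : V} (hα : α ∈ PhiI S I) :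
    reflV α ∈ weyl (PhiI S I) := Subgroup.subset_closure ⟨α, hα, rfl⟩

lemma weyl_finite (S : RootSys V) (I : Finset V) :
    (weyl (PhiI S I) : Set (V ≃ₗ[ℝ] V)).Finite := by
  let f : (weyl (PhiI S I)) → (S.Φ → S.Φ) := fun w γ => ⟨w.1 γ.1, weyl_pres S I w.2 _ γ.2⟩
  have hf : Function.Injective f := by
    intro u w h
    apply Subtype.ext
    apply LinearEquiv.toLinearMap_injective
    refine LinearMap.ext_on S.span_eq_top ?_
    intro γ hγ
    have := congrFun h ⟨γ, hγ⟩
    exact congrArg Subtype.val this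
  exact Set.finite_coe_iff.mp (Finite.of_injective f hf)

/-- the group `W_I` as a finset -/
def WI (S : RootSys V) (I : Finset V) : Finset (V ≃ₗ[ℝ] V) := (weyl_finite S I).toFinset

lemma mem_WI {S : RootSys V} {I : Finset V} {w : V ≃ₗ[ℝ] V} :
    w ∈ WI S I ↔ w ∈ weyl (PhiI S I) := by simp [WI]

lemma theta_eq (S : RootSys V) (I : Finset V) (l : HStar V) :
    theta S I l = ∑ w ∈ WI S I, Finsupp.single (wAct w l) ((-1) ^ len S w) := by
  unfold theta
  rw [← finsum_mem_coe_finset]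
  simp [WI]

lemma theta_sRefl (S : RootSys V) (I : Finset V) {α : V} (hα : α ∈ PhiI S I) (l : HStar V) :
    theta S I (sRefl α l) = - theta S I l := by
  rw [theta_eq, theta_eq, ← Finset.sum_neg_distrib]
  have hm := reflV_mem_weyl S I hα
  refine Finset.sum_nbij' (fun w => w * reflV α) (fun w => w * reflV α) ?_ ?_ ?_ ?_ ?_
  · intro w hw; rw [mem_WI] at *; exact mul_mem hw hm
  · intro w hw; rw [mem_WI] at *; exact mul_mem hw hm
  · intro w hw; simp only [mul_assoc, reflV_mul_self, mul_one]
  · intro w hw; simp only [mul_assoc, reflV_mul_self, mul_one]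
  · intro w hw
    rw [sign_len_mul_refl S (weyl_pres S I (mem_WI.mp hw)) hα.1, wAct_mul, wAct_reflV,
      Finsupp.single_neg, neg_neg]

lemma sRefl_of_zero {α : V} {l : HStar V} (h : l α = 0) : sRefl α l = l := by
  simp [sRefl, coroot, h]

lemma theta_sing (S : RootSys V) (I : Finset V) {α : V} (hα : α ∈ PhiI S I) {l : HStar V}
    (h : l α = 0) : theta S I l = 0 := by
  have := theta_sRefl S I hα l
  rw [sRefl_of_zero h] at this
  exact self_eq_neg.mp this

lemma theta_coeff_zero (S : RootSys V) (I : Finset V) {l ν : HStar V}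
    (h : ¬ ∃ w ∈ weyl (PhiI S I), wAct w l = ν) : theta S I l ν = 0 := by
  rw [theta_eq, Finsupp.finsetSum_apply]
  refine Finset.sum_eq_zero fun w hw => ?_
  rw [Finsupp.single_apply, if_neg]
  intro h'; exact h ⟨w, mem_WI.mp hw, h'⟩

lemma theta_coeff_odd (S : RootSys V) (I : Finset V) {l ν : HStar V}
    (hst : ∀ w ∈ weyl (PhiI S I), wAct w ν = ν → w = 1)
    (h : ∃ w ∈ weyl (PhiI S I), wAct w l = ν) : ((theta S I l ν : ℤ) : ZMod 2) = 1 := by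
  obtain ⟨w, hw, hwl⟩ := h
  rw [theta_eq, Finsupp.finsetSum_apply, Finset.sum_eq_single w]
  · rw [Finsupp.single_apply, if_pos hwl]
    push_cast
    have : (-1 : ZMod 2) = 1 := by decide
    rw [this, one_pow]
  · intro u hu hne
    rw [Finsupp.single_apply, if_neg]
    intro h'
    apply hne
    have h2 : u * w⁻¹ = 1 := by
      apply hst _ (mul_mem (mem_WI.mp hu) (inv_mem hw))
      rw [wAct_mul, ← hwl, ← wAct_mul w⁻¹ w, inv_mul_cancel, wAct_one, h', hwl]
    exact mul_inv_eq_one.mp h2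
  · intro hno; exact absurd (mem_WI.mpr hw) hno



/-! ### Coordinates -/

/-- standard basis vector, indexed by `Fin n` -/
def bE {n : ℕ} (i : Fin n) : EuclideanSpace ℝ (Fin n) := EuclideanSpace.single i 1

/-- the vector `e_i - η e_j` -/
def rt {n : ℕ} (η : ℤ) (i j : Fin n) : EuclideanSpace ℝ (Fin n) := bE i - (η : ℝ) • bE j

lemma bE_inner {n : ℕ} (i j : Fin n) : ⟪bE i, bE j⟫ = if i = j then (1 : ℝ) else 0 := by
  simp [bE, EuclideanSpace.inner_single_left]

lemma bE_apply {n : ℕ} (i j : Fin n) : bE i j = if j = i then (1 : ℝ) else 0 := by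
  simp [bE]

lemma coroot_bE {n : ℕ} (i : Fin n) : coroot (bE i) = (2 : ℝ) • bE i := by
  rw [coroot, bE_inner, if_pos rfl, div_one]

lemma coroot_rt {n : ℕ} {η : ℤ} (hη : η = 1 ∨ η = -1) {i j : Fin n} (hij : i ≠ j) :
    coroot (rt η i j) = rt η i j := by
  have : ⟪rt η i j, rt η i j⟫ = 2 := by
    simp only [rt, inner_sub_left, inner_sub_right, real_inner_smul_left, real_inner_smul_right,
      bE_inner, hij, hij.symm]
    rcases hη with rfl | rfl <;> norm_num
  rw [coroot, this, div_self two_ne_zero, one_smul]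

lemma hstar_ext {n : ℕ} {l l' : HStar (EuclideanSpace ℝ (Fin n))}
    (h : ∀ k, l (bE k) = l' (bE k)) : l = l' := by
  refine (EuclideanSpace.basisFun (Fin n) ℝ).toBasis.ext fun i => ?_
  simpa [bE] using h i

lemma lequiv_ext {n : ℕ} {u w : EuclideanSpace ℝ (Fin n) ≃ₗ[ℝ] EuclideanSpace ℝ (Fin n)}
    (h : ∀ k, u (bE k) = w (bE k)) : u = w := by
  apply LinearEquiv.toLinearMap_injective
  refine (EuclideanSpace.basisFun (Fin n) ℝ).toBasis.ext fun i => ?_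
  simpa [bE] using h i

lemma sRefl_bE {n : ℕ} (i k : Fin n) (l : HStar (EuclideanSpace ℝ (Fin n))) :
    sRefl (bE i) l (bE k) = if k = i then - l (bE i) else l (bE k) := by
  simp only [sRefl, coroot_bE, LinearMap.sub_apply, LinearMap.smul_apply, emb, LinearMap.coe_mk,
    AddHom.coe_mk, bE_inner, map_smul, smul_eq_mul, Complex.real_smul]
  split_ifs with h1 h2 h2
  · subst h1; push_cast; ring
  · exact absurd h1.symm h2
  · exact absurd h2.symm h1
  · simp

lemma sRefl_rt {n : ℕ} {η : ℤ} (hη : η = 1 ∨ η = -1) {i j : Fin n} (hij : i ≠ j) (k : Fin n)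
    (l : HStar (EuclideanSpace ℝ (Fin n))) :
    sRefl (rt η i j) l (bE k) = if k = i then (η : ℂ) * l (bE j) else
      if k = j then (η : ℂ) * l (bE i) else l (bE k) := by
  simp only [sRefl, coroot_rt hη hij, LinearMap.sub_apply, LinearMap.smul_apply, emb,
    LinearMap.coe_mk, AddHom.coe_mk]
  simp only [rt, inner_sub_left, real_inner_smul_left, bE_inner, map_sub, map_smul, smul_eq_mul,
    Complex.real_smul]
  by_cases h1 : k = i
  · subst h1
    simp [hij.symm]
  · by_cases h2 : k = j
    · subst h2
      simp [hij, h1]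
      rcases hη with rfl | rfl <;> push_cast <;> ring
    · simp [h1, h2, Ne.symm h1, Ne.symm h2]

lemma reflV_bE {n : ℕ} (i k : Fin n) :
    reflV (bE i) (bE k) = if k = i then - bE i else bE k := by
  rw [reflV_apply, coroot_bE, real_inner_smul_right, bE_inner]
  split_ifs with h
  · subst h; rw [mul_one, two_smul]; abel
  · simp

lemma reflV_rt {n : ℕ} {η : ℤ} (hη : η = 1 ∨ η = -1) {i j : Fin n} (hij : i ≠ j) (k : Fin n) :
    reflV (rt η i j) (bE k) = if k = i then (η : ℝ) • bE j else
      if k = j then (η : ℝ) • bE i else bE k := by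
  rw [reflV_apply, coroot_rt hη hij]
  simp only [rt, inner_sub_right, real_inner_smul_right, bE_inner]
  by_cases h1 : k = i
  · subst h1
    simp [hij]
  · by_cases h2 : k = j
    · subst h2
      simp [h1]
      rcases hη with rfl | rfl <;> push_cast <;> simp
    · simp [h1, h2]

lemma bE_injective {n : ℕ} : Function.Injective (bE : Fin n → EuclideanSpace ℝ (Fin n)) := by
  intro i j h
  have := congrArg (fun v => v i) h
  simp only [bE_apply] at this
  by_contra hne
  simp [hne] at this

lemma rt_neg_one {n : ℕ} (i j : Fin n) : rt (-1) i j = bE i + bE j := by simp [rt]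
lemma rt_one {n : ℕ} (i j : Fin n) : rt 1 i j = bE i - bE j := by simp [rt]

lemma bE_add_eq {n : ℕ} {i j i' j' : Fin n} (h : bE i + bE j = bE i' + bE j') :
    (i = i' ∧ j = j') ∨ (i = j' ∧ j = i') := by
  have h1 := congrArg (fun v => v i) h
  have h2 := congrArg (fun v => v j) h
  have h3 := congrArg (fun v => v i') h
  simp only [PiLp.add_apply, bE_apply] at h1 h2 h3
  by_cases a1 : i = i' <;> by_cases a2 : i = j' <;> by_cases a3 : j = i' <;> by_cases a4 : j = j' <;>
    by_cases a5 : i = j <;> simp_all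

lemma bE_ne_add {n : ℕ} (i i' j' : Fin n) : bE i ≠ bE i' + bE j' := by
  intro h
  have h1 := congrArg (fun v => ∑ k, v k) h
  simp [bE_apply, Finset.sum_add_distrib] at h1

/-- sums over a block of powers of coordinates -/
def psum {n : ℕ} (blk : Fin n → ℕ) (l : HStar (EuclideanSpace ℝ (Fin n))) (p s : ℕ) : ℂ :=
  ∑ k with blk k = s, (l (bE k)) ^ p

lemma psum_one_change {n : ℕ} (blk : Fin n → ℕ) (l l' : HStar (EuclideanSpace ℝ (Fin n)))
    (i : Fin n) (h : ∀ k, k ≠ i → l' (bE k) = l (bE k)) (p s : ℕ) :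
    psum blk l' p s - psum blk l p s
      = if blk i = s then l' (bE i) ^ p - l (bE i) ^ p else 0 := by
  unfold psum
  rw [← Finset.sum_sub_distrib, Finset.sum_filter, Finset.sum_eq_single i]
  · intro k _ hk
    simp [h k hk]
  · simp

lemma psum_two_change {n : ℕ} (blk : Fin n → ℕ) (l l' : HStar (EuclideanSpace ℝ (Fin n)))
    {i j : Fin n} (hij : i ≠ j) (h : ∀ k, k ≠ i → k ≠ j → l' (bE k) = l (bE k)) (p s : ℕ) :
    psum blk l' p s - psum blk l p s
      = (if blk i = s then l' (bE i) ^ p - l (bE i) ^ p else 0) +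
        (if blk j = s then l' (bE j) ^ p - l (bE j) ^ p else 0) := by
  unfold psum
  rw [← Finset.sum_sub_distrib, Finset.sum_filter, Fintype.sum_eq_add i j hij]
  intro k hk
  simp [h k hk.1 hk.2]

/-- The combinatorial data extracted from the hypotheses of the theorem. -/
structure Ctx {n : ℕ} (S : RootSys (EuclideanSpace ℝ (Fin n)))
    (I : Finset (EuclideanSpace ℝ (Fin n))) (blk : Fin n → ℕ) (M : ℕ)
    (lam : HStar (EuclideanSpace ℝ (Fin n))) : Prop where
  hpos : ∀ v, v ∈ S.pos ↔ (∃ i j, i < j ∧ (v = rt 1 i j ∨ v = rt (-1) i j)) ∨ ∃ i, v = bE i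
  hPhi : ∀ v, v ∈ PhiI S I ↔ (∃ i j, i ≠ j ∧ blk i = blk j ∧ v = rt 1 i j) ∨
    (∃ i j, i ≠ j ∧ blk i = M ∧ blk j = M ∧ (v = rt (-1) i j ∨ v = - rt (-1) i j)) ∨
    ∃ i, blk i = M ∧ (v = bE i ∨ v = - bE i)
  mono : Monotone blk
  le : ∀ i, blk i ≤ M
  F1 : ∀ i j, i < j → blk i = blk j → IsPosInt (lam (bE i) - lam (bE j))
  F2 : ∀ i, blk i = M → IsPosInt (2 * lam (bE i))

/-- image of basis vectors respects the block structure -/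
def Resp {n : ℕ} (blk : Fin n → ℕ) (M : ℕ)
    (w : EuclideanSpace ℝ (Fin n) ≃ₗ[ℝ] EuclideanSpace ℝ (Fin n)) : Prop :=
  ∀ k, ∃ k', blk k' = blk k ∧ (w (bE k) = bE k' ∨ (blk k = M ∧ w (bE k) = - bE k'))

section ctx
variable {n : ℕ} {S : RootSys (EuclideanSpace ℝ (Fin n))}
    {I : Finset (EuclideanSpace ℝ (Fin n))} {blk : Fin n → ℕ} {M : ℕ}
    {lam : HStar (EuclideanSpace ℝ (Fin n))}

lemma Resp.mul {u w : EuclideanSpace ℝ (Fin n) ≃ₗ[ℝ] EuclideanSpace ℝ (Fin n)}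
    (hu : Resp blk M u) (hw : Resp blk M w) : Resp blk M (u * w) := by
  intro k
  obtain ⟨k1, hb1, h1⟩ := hw k
  obtain ⟨k2, hb2, h2⟩ := hu k1
  refine ⟨k2, hb2.trans hb1, ?_⟩
  simp only [LinearEquiv.mul_apply]
  rcases h1 with h1 | ⟨hM, h1⟩ <;> rcases h2 with h2 | ⟨hM2, h2⟩ <;> rw [h1] <;>
    simp only [map_neg, h2, neg_neg]
  · exact Or.inl trivial
  · exact Or.inr ⟨hb1 ▸ hM2, trivial⟩
  · exact Or.inr ⟨hM, trivial⟩
  · exact Or.inl trivial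

lemma Ctx.resp_refl (c : Ctx S I blk M lam) {α : EuclideanSpace ℝ (Fin n)} (hα : α ∈ PhiI S I) :
    Resp blk M (reflV α) := by
  intro k
  rcases (c.hPhi α).mp hα with ⟨i, j, hij, hb, rfl⟩ | ⟨i, j, hij, hi, hj, h⟩ | ⟨i, hi, h⟩
  · rw [reflV_rt (Or.inl rfl) hij]
    split_ifs with h1 h2
    · exact ⟨j, by rw [h1, hb], Or.inl (by simp)⟩
    · exact ⟨i, by rw [h2, hb], Or.inl (by simp)⟩
    · exact ⟨k, rfl, Or.inl rfl⟩
  · have : reflV α = reflV (rt (-1) i j) := by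
      rcases h with rfl | rfl
      · rfl
      · rw [reflV_neg]
    rw [this, reflV_rt (Or.inr rfl) hij]
    split_ifs with h1 h2
    · exact ⟨j, by rw [h1, hi, hj], Or.inr ⟨by rw [h1, hi], by simp⟩⟩
    · exact ⟨i, by rw [h2, hi, hj], Or.inr ⟨by rw [h2, hj], by simp⟩⟩
    · exact ⟨k, rfl, Or.inl rfl⟩
  · have : reflV α = reflV (bE i) := by
      rcases h with rfl | rfl
      · rfl
      · rw [reflV_neg]
    rw [this, reflV_bE]
    split_ifs with h1
    · exact ⟨i, by rw [h1], Or.inr ⟨by rw [h1, hi], rfl⟩⟩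
    · exact ⟨k, rfl, Or.inl rfl⟩

lemma Ctx.resp (c : Ctx S I blk M lam)
    {w : EuclideanSpace ℝ (Fin n) ≃ₗ[ℝ] EuclideanSpace ℝ (Fin n)}
    (hw : w ∈ weyl (PhiI S I)) : Resp blk M w ∧ Resp blk M w⁻¹ := by
  unfold weyl at hw
  induction hw using Subgroup.closure_induction with
  | mem x hx =>
    obtain ⟨α, hα, rfl⟩ := hx
    refine ⟨c.resp_refl hα, ?_⟩
    rw [inv_eq_of_mul_eq_one_left (reflV_mul_self α)]
    exact c.resp_refl hα
  | one =>
    have : Resp blk M (1 : EuclideanSpace ℝ (Fin n) ≃ₗ[ℝ] EuclideanSpace ℝ (Fin n)) :=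
      fun k => ⟨k, rfl, Or.inl rfl⟩
    exact ⟨this, by rwa [inv_one]⟩
  | mul x y _ _ hx hy => exact ⟨hx.1.mul hy.1, by rw [mul_inv_rev]; exact hy.2.mul hx.2⟩
  | inv x _ hx => exact ⟨hx.2, by rw [inv_inv]; exact hx.1⟩

lemma wAct_apply' (w : EuclideanSpace ℝ (Fin n) ≃ₗ[ℝ] EuclideanSpace ℝ (Fin n))
    (l : HStar (EuclideanSpace ℝ (Fin n))) (v : EuclideanSpace ℝ (Fin n)) :
    wAct w l v = l (w⁻¹ v) := rfl

lemma Ctx.psum_inv (c : Ctx S I blk M lam)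
    {w : EuclideanSpace ℝ (Fin n) ≃ₗ[ℝ] EuclideanSpace ℝ (Fin n)}
    (hw : w ∈ weyl (PhiI S I)) (l : HStar (EuclideanSpace ℝ (Fin n))) (p : ℕ) {s : ℕ}
    (hs : s < M) : psum blk (wAct w l) p s = psum blk l p s := by
  choose σ hσ1 hσ2 using (c.resp hw).2
  have h3 : ∀ k, blk k = s → w⁻¹ (bE k) = bE (σ k) := by
    intro k hk
    rcases hσ2 k with h | ⟨h, _⟩
    · exact h
    · omega
  unfold psum
  have hmap : ∀ k ∈ Finset.univ.filter (fun k => blk k = s),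
      σ k ∈ Finset.univ.filter (fun k => blk k = s) := by
    intro k hk
    simp only [Finset.mem_filter, Finset.mem_univ, true_and] at *
    rw [hσ1, hk]
  have hinj : Set.InjOn σ (Finset.univ.filter (fun k => blk k = s) : Finset (Fin n)) := by
    intro a ha b hb hab
    simp only [Finset.coe_filter, Finset.mem_univ, true_and, Set.mem_ofPred_eq] at ha hb
    apply bE_injective
    apply w⁻¹.injective
    rw [h3 a ha, h3 b hb, hab]
  refine Finset.sum_nbij σ hmap hinj (Finset.surjOn_of_injOn_of_card_le σ hmap hinj le_rfl) ?_
  intro k hk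
  simp only [Finset.mem_filter, Finset.mem_univ, true_and] at hk
  rw [wAct_apply', h3 k hk]

lemma Ctx.stab (c : Ctx S I blk M lam) {ν : HStar (EuclideanSpace ℝ (Fin n))}
    (hν : ∀ α ∈ PhiI S I, ν α ≠ 0)
    (w : EuclideanSpace ℝ (Fin n) ≃ₗ[ℝ] EuclideanSpace ℝ (Fin n))
    (hw : w ∈ weyl (PhiI S I)) (h : wAct w ν = ν) : w = 1 := by
  rw [← inv_eq_one]
  refine lequiv_ext fun k => ?_
  have hk : ν (w⁻¹ (bE k)) = ν (bE k) := by rw [← wAct_apply', h]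
  obtain ⟨k', hb, h1 | ⟨hM, h1⟩⟩ := (c.resp hw).2 k
  · rw [h1] at hk ⊢
    by_cases hkk : k' = k
    · rw [hkk]; rfl
    · exfalso
      refine hν (rt 1 k' k) ((c.hPhi _).mpr (Or.inl ⟨k', k, hkk, hb, rfl⟩)) ?_
      rw [rt_one, map_sub, hk, sub_self]
  · exfalso
    rw [h1, map_neg] at hk
    by_cases hkk : k' = k
    · subst hkk
      refine hν (bE k') ((c.hPhi _).mpr (Or.inr (Or.inr ⟨k', hM, Or.inl rfl⟩))) ?_
      exact self_eq_neg.mp hk.symm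
    · refine hν (rt (-1) k' k) ((c.hPhi _).mpr (Or.inr (Or.inl ⟨k', k, hkk, hb.trans hM, hM, Or.inl rfl⟩))) ?_
      rw [rt_neg_one, map_add, ← hk, add_neg_cancel]

end ctx


/-! ### Classification of the elements of `Ψ⁺` -/

/-- `j` is a mate of `i`: the roots `e_i` and `e_i + e_j` give cancelling terms. -/
def Mate {n : ℕ} (blk : Fin n → ℕ) (M : ℕ) (lam : HStar (EuclideanSpace ℝ (Fin n)))
    (i j : Fin n) : Prop :=
  blk i < M ∧ i ≠ j ∧ ((blk j = blk i ∧ lam (bE j) = 0) ∨ (blk j = M ∧ lam (bE j) = lam (bE i)))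

/-- type I: the class of `e_i` -/
def TyI {n : ℕ} (blk : Fin n → ℕ) (M : ℕ) (lam : HStar (EuclideanSpace ℝ (Fin n)))
    (i : Fin n) (β : EuclideanSpace ℝ (Fin n)) : Prop :=
  blk i < M ∧ IsPosInt (2 * lam (bE i)) ∧ (β = bE i ∨ ∃ j, Mate blk M lam i j ∧ β = rt (-1) i j)

/-- type C: `e_i - η e_j` with `j` in the last block -/
def TyC {n : ℕ} (blk : Fin n → ℕ) (M : ℕ) (lam : HStar (EuclideanSpace ℝ (Fin n)))
    (η : ℤ) (i j : Fin n) (β : EuclideanSpace ℝ (Fin n)) : Prop :=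
  (η = 1 ∨ η = -1) ∧ blk i < M ∧ blk j = M ∧ β = rt η i j ∧ lam (bE i) - η * lam (bE j) ≠ 0 ∧
    lam (bE i) + η * lam (bE j) ≠ 0

/-- type B: `e_i + e_j` in the same block -/
def TyB {n : ℕ} (blk : Fin n → ℕ) (M : ℕ) (lam : HStar (EuclideanSpace ℝ (Fin n)))
    (i j : Fin n) (β : EuclideanSpace ℝ (Fin n)) : Prop :=
  i < j ∧ blk i < M ∧ blk j = blk i ∧ β = rt (-1) i j ∧ lam (bE i) ≠ 0 ∧ lam (bE j) ≠ 0 ∧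
    lam (bE i) + lam (bE j) ≠ 0

/-- type D: `e_i - η e_j` with different blocks, none of them the last one -/
def TyD {n : ℕ} (blk : Fin n → ℕ) (M : ℕ) (lam : HStar (EuclideanSpace ℝ (Fin n)))
    (η : ℤ) (i j : Fin n) (β : EuclideanSpace ℝ (Fin n)) : Prop :=
  (η = 1 ∨ η = -1) ∧ blk i < blk j ∧ blk j < M ∧ β = rt η i j ∧ lam (bE i) - η * lam (bE j) ≠ 0

lemma IsPosInt.ne_zero {z : ℂ} (h : IsPosInt z) : z ≠ 0 := by
  obtain ⟨k, hk, rfl⟩ := h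
  exact_mod_cast hk.ne'

lemma IsPosInt.add {z w : ℂ} (h : IsPosInt z) (h' : IsPosInt w) : IsPosInt (z + w) := by
  obtain ⟨k, hk, rfl⟩ := h
  obtain ⟨k', hk', rfl⟩ := h'
  exact ⟨k + k', by omega, by push_cast; rfl⟩

lemma IsPosInt.not_neg {z : ℂ} (h : IsPosInt z) (h' : IsPosInt (-z)) : False := by
  have := (h.add h').ne_zero
  simp at this

section ctx
variable {n : ℕ} {S : RootSys (EuclideanSpace ℝ (Fin n))}
    {I : Finset (EuclideanSpace ℝ (Fin n))} {blk : Fin n → ℕ} {M : ℕ}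
    {lam : HStar (EuclideanSpace ℝ (Fin n))}

lemma Ctx.inj (c : Ctx S I blk M lam) {i j : Fin n} (hb : blk i = blk j)
    (h : lam (bE i) = lam (bE j)) : i = j := by
  rcases lt_trichotomy i j with h1 | h1 | h1
  · exact absurd (by rw [h, sub_self]) (c.F1 i j h1 hb).ne_zero
  · exact h1
  · exact absurd (by rw [h, sub_self]) (c.F1 j i h1 hb.symm).ne_zero

/-- change of the block power sums -/
def dl (blk : Fin n → ℕ) (lam : HStar (EuclideanSpace ℝ (Fin n))) (β : EuclideanSpace ℝ (Fin n))
    (p s : ℕ) : ℂ := psum blk (sRefl β lam) p s - psum blk lam p s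

lemma dl_rt {η : ℤ} (hη : η = 1 ∨ η = -1) {i j : Fin n} (hij : i ≠ j) (p s : ℕ) :
    dl blk lam (rt η i j) p s
      = (if blk i = s then (η * lam (bE j)) ^ p - lam (bE i) ^ p else 0) +
        (if blk j = s then (η * lam (bE i)) ^ p - lam (bE j) ^ p else 0) := by
  unfold dl
  rw [psum_two_change blk lam _ hij]
  · simp [sRefl_rt hη hij, hij.symm]
  · intro k h1 h2
    simp [sRefl_rt hη hij, h1, h2]

lemma dl_bE (i : Fin n) (p s : ℕ) :
    dl blk lam (bE i) p s = if blk i = s then (-lam (bE i)) ^ p - lam (bE i) ^ p else 0 := by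
  unfold dl
  rw [psum_one_change blk lam _ i]
  · simp [sRefl_bE]
  · intro k h1
    simp [sRefl_bE, h1]

lemma TyI.dl {i : Fin n} {β : EuclideanSpace ℝ (Fin n)} (h : TyI blk M lam i β) (p : ℕ) {s : ℕ}
    (hs : s < M) :
    dl blk lam β p s = if blk i = s then (-lam (bE i)) ^ p - lam (bE i) ^ p else 0 := by
  obtain ⟨hi, -, rfl | ⟨j, ⟨-, hij, ⟨hb, h0⟩ | ⟨hb, h0⟩⟩, rfl⟩⟩ := h
  · exact dl_bE _ _ _
  · rw [dl_rt (Or.inr rfl) hij, hb, h0]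
    split_ifs <;> push_cast <;> simp
  · rw [dl_rt (Or.inr rfl) hij, hb, h0]
    have : M ≠ s := hs.ne'
    simp [this]

lemma TyC.dl {η : ℤ} {i j : Fin n} {β : EuclideanSpace ℝ (Fin n)} (h : TyC blk M lam η i j β)
    (p : ℕ) {s : ℕ} (hs : s < M) :
    dl blk lam β p s = if blk i = s then (η * lam (bE j)) ^ p - lam (bE i) ^ p else 0 := by
  obtain ⟨hη, hi, hj, rfl, -, -⟩ := h
  have hij : i ≠ j := by rintro rfl; omega
  have : M ≠ s := hs.ne'
  rw [dl_rt hη hij, hj, if_neg this, add_zero]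

lemma TyB.dl {i j : Fin n} {β : EuclideanSpace ℝ (Fin n)} (h : TyB blk M lam i j β)
    (p s : ℕ) :
    dl blk lam β p s = if blk i = s then (-lam (bE j)) ^ p - lam (bE i) ^ p +
      ((-lam (bE i)) ^ p - lam (bE j) ^ p) else 0 := by
  obtain ⟨hij, hi, hj, rfl, -⟩ := h
  rw [dl_rt (Or.inr rfl) hij.ne, hj]
  split_ifs <;> push_cast <;> simp

lemma TyD.dl {η : ℤ} {i j : Fin n} {β : EuclideanSpace ℝ (Fin n)} (h : TyD blk M lam η i j β)
    (p s : ℕ) :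
    dl blk lam β p s = (if blk i = s then (η * lam (bE j)) ^ p - lam (bE i) ^ p else 0) +
        (if blk j = s then (η * lam (bE i)) ^ p - lam (bE j) ^ p else 0) := by
  obtain ⟨hη, hi, hj, rfl, -⟩ := h
  have hij : i ≠ j := by rintro rfl; omega
  rw [dl_rt hη hij]

lemma Ctx.classify (c : Ctx S I blk M lam) {β : EuclideanSpace ℝ (Fin n)}
    (hβ : β ∈ PsiP S (PhiI S I) (S.Φ : Set (EuclideanSpace ℝ (Fin n))) lam) :
    (∃ i, TyI blk M lam i β) ∨ (∃ η i j, TyC blk M lam η i j β) ∨ (∃ i j, TyB blk M lam i j β) ∨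
      ∃ η i j, TyD blk M lam η i j β := by
  obtain ⟨⟨-, hp⟩, hnot, hIntg⟩ := hβ
  have key : ∀ (η : ℤ) (i j : Fin n), (η = 1 ∨ η = -1) → i < j → β = rt η i j →
      (∃ i, TyI blk M lam i β) ∨ (∃ η i j, TyC blk M lam η i j β) ∨
      (∃ i j, TyB blk M lam i j β) ∨ ∃ η i j, TyD blk M lam η i j β := by
    intro η i j hη hij hβ
    have hIntg' : IsPosInt (lam (bE i) - η * lam (bE j)) := by
      rw [hβ, coroot_rt hη hij.ne] at hIntg
      simpa [rt] using hIntg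
    have hne := hIntg'.ne_zero
    have hbij := c.mono hij.le
    have hjM := c.le j
    rcases hjM.lt_or_eq with hj | hj
    · rcases hbij.lt_or_eq with hb | hb
      · exact Or.inr (Or.inr (Or.inr ⟨η, i, j, hη, hb, hj, hβ, hne⟩))
      · rcases hη with rfl | rfl
        · exact absurd ((c.hPhi β).mpr (Or.inl ⟨i, j, hij.ne, hb, hβ⟩)) hnot
        · have hIntg2 : IsPosInt (lam (bE i) + lam (bE j)) := by simpa using hIntg'
          by_cases h0 : lam (bE j) = 0
          · rw [h0, add_zero] at hIntg2
            refine Or.inl ⟨i, by omega, by rw [two_mul]; exact hIntg2.add hIntg2, Or.inr ⟨j, ⟨by omega, hij.ne, Or.inl ⟨hb.symm, h0⟩⟩, hβ⟩⟩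
          · refine Or.inr (Or.inr (Or.inl ⟨i, j, hij, by omega, hb.symm, hβ, ?_, h0, hIntg2.ne_zero⟩))
            intro h0'
            have h1 := c.F1 i j hij hb
            rw [h0'] at h1 hIntg2
            exact hIntg2.not_neg (by simpa using h1)
    · have hiM := c.le i
      rcases hiM.lt_or_eq with hi | hi
      · by_cases hy : lam (bE i) + η * lam (bE j) = 0
        · rcases hη with rfl | rfl
          · exfalso
            have h2 := c.F2 j hj
            refine h2.not_neg ?_
            have : -(2 * lam (bE j)) = lam (bE i) - ((1:ℤ):ℂ) * lam (bE j) := by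
              push_cast at hy ⊢; linear_combination -hy
            rw [this]; exact hIntg'
          · have h3 : lam (bE j) = lam (bE i) := by push_cast at hy; linear_combination -hy
            refine Or.inl ⟨i, hi, ?_, Or.inr ⟨j, ⟨hi, hij.ne, Or.inr ⟨hj, h3⟩⟩, hβ⟩⟩
            rw [← h3]; exact c.F2 j hj
        · exact Or.inr (Or.inl ⟨η, i, j, hη, hi, hj, hβ, hne, hy⟩)
      · exfalso
        rcases hη with rfl | rfl
        · exact hnot ((c.hPhi β).mpr (Or.inl ⟨i, j, hij.ne, by rw [hi, hj], hβ⟩))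
        · exact hnot ((c.hPhi β).mpr (Or.inr (Or.inl ⟨i, j, hij.ne, hi, hj, Or.inl hβ⟩)))
  rcases (c.hpos β).mp hp with ⟨i, j, hij, h | h⟩ | ⟨i, h⟩
  · exact key 1 i j (Or.inl rfl) hij h
  · exact key (-1) i j (Or.inr rfl) hij h
  · left
    refine ⟨i, (c.le i).lt_of_ne ?_, ?_, Or.inl h⟩
    · intro hM
      exact hnot ((c.hPhi β).mpr (Or.inr (Or.inr ⟨i, hM, Or.inl h⟩)))
    · rw [h, coroot_bE] at hIntg
      simpa using hIntg

/-- equality of the invariants of two roots -/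
def SameInv (blk : Fin n → ℕ) (M : ℕ) (lam : HStar (EuclideanSpace ℝ (Fin n)))
    (β β' : EuclideanSpace ℝ (Fin n)) : Prop :=
  ∀ p s, s < M → dl blk lam β p s = dl blk lam β' p s

lemma TyI.ne {i : Fin n} {β : EuclideanSpace ℝ (Fin n)} (h : TyI blk M lam i β) :
    lam (bE i) ≠ 0 := by
  intro h0
  exact h.2.1.ne_zero (by rw [h0, mul_zero])

lemma uniq_II (c : Ctx S I blk M lam) {i i' : Fin n} {β β' : EuclideanSpace ℝ (Fin n)}
    (h : TyI blk M lam i β) (h' : TyI blk M lam i' β') (hs : SameInv blk M lam β β') : i = i' := by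
  have h1 := hs 1 (blk i) h.1
  rw [h.dl _ h.1, h'.dl _ h.1, if_pos rfl] at h1
  have hne := h.ne
  split_ifs at h1 with hb
  · exact c.inj hb.symm (by linear_combination (-1/2) * h1)
  · exact absurd (by linear_combination (-1/2) * h1) hne

lemma uniq_IC {i i' j' : Fin n} {η : ℤ} {β β' : EuclideanSpace ℝ (Fin n)}
    (h : TyI blk M lam i β) (h' : TyC blk M lam η i' j' β') (hs : SameInv blk M lam β β') :
    False := by
  have h1 := hs 1 (blk i') h'.2.1
  have h2 := hs 2 (blk i') h'.2.1
  rw [h.dl _ h'.2.1, h'.dl _ h'.2.1, if_pos rfl] at h1 h2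
  obtain ⟨-, -, -, -, a1, a2⟩ := h'
  have : (lam (bE i') - η * lam (bE j')) * (lam (bE i') + η * lam (bE j')) = 0 := by
    split_ifs at h1 h2
    · linear_combination h2
    · linear_combination h2
  exact (mul_ne_zero a1 a2) this

lemma uniq_IB {i i' j' : Fin n} {β β' : EuclideanSpace ℝ (Fin n)}
    (h : TyI blk M lam i β) (h' : TyB blk M lam i' j' β') (hs : SameInv blk M lam β β') :
    False := by
  have h1 := hs 1 (blk i') h'.2.1
  have h2 := hs 3 (blk i') h'.2.1
  rw [h.dl _ h'.2.1, h'.dl, if_pos rfl] at h1 h2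
  obtain ⟨-, -, -, -, a1, a2, a3⟩ := h'
  split_ifs at h1 h2
  · have hx : lam (bE i) = lam (bE i') + lam (bE j') := by linear_combination (-1/2) * h1
    rw [hx] at h2
    exact mul_ne_zero (mul_ne_zero a1 a2) a3 (by linear_combination (-1/6) * h2)
  · exact a3 (by linear_combination (1/2) * h1)

lemma TyD.nonzero {i j : Fin n} {η : ℤ} {β : EuclideanSpace ℝ (Fin n)}
    (h : TyD blk M lam η i j β) : JantzenGVM.dl blk lam β 1 (blk i) ≠ 0 ∧ JantzenGVM.dl blk lam β 1 (blk j) ≠ 0 := by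
  rw [h.dl, h.dl]
  obtain ⟨hη, hb, hj, -, a⟩ := h
  rw [if_pos rfl, if_pos rfl, if_neg hb.ne, if_neg hb.ne']
  refine ⟨fun h0 => a (by linear_combination -h0), fun h0 => a ?_⟩
  rcases hη with rfl | rfl <;> push_cast at * <;> [linear_combination h0; linear_combination -h0]

lemma uniq_ID {i i' j' : Fin n} {η : ℤ} {β β' : EuclideanSpace ℝ (Fin n)}
    (h : TyI blk M lam i β) (h' : TyD blk M lam η i' j' β') (hs : SameInv blk M lam β β') :
    False := by
  have h0 := h'.nonzero
  obtain ⟨hη, hb, hj, -, a⟩ := h'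
  rw [← hs 1 _ hj, ← hs 1 _ (hb.trans hj), h.dl _ hj, h.dl _ (hb.trans hj)] at h0
  have hb' := hb.ne
  split_ifs at h0 <;> simp_all

lemma uniq_CC (c : Ctx S I blk M lam) {i j i' j' : Fin n} {η η' : ℤ}
    {β β' : EuclideanSpace ℝ (Fin n)}
    (h : TyC blk M lam η i j β) (h' : TyC blk M lam η' i' j' β') (hs : SameInv blk M lam β β') :
    β = β' := by
  have h1 := hs 1 (blk i) h.2.1
  have h2 := hs 2 (blk i) h.2.1
  rw [h.dl _ h.2.1, h'.dl _ h.2.1, if_pos rfl] at h1 h2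
  obtain ⟨hη, hi, hj, rfl, a1, a2⟩ := h
  obtain ⟨hη', hi', hj', rfl, -, -⟩ := h'
  split_ifs at h1 h2 with hb
  · have h3 : lam (bE i) + η * lam (bE j) = lam (bE i') + η' * lam (bE j') := by
      apply mul_left_cancel₀ a1
      linear_combination (lam (bE i') + η' * lam (bE j')) * h1 - h2
    have h4 : lam (bE i) = lam (bE i') := by linear_combination (1/2) * h3 - (1/2) * h1
    have h5 : η * lam (bE j) = η' * lam (bE j') := by linear_combination (1/2) * h3 + (1/2) * h1
    obtain rfl := c.inj hb.symm h4
    have hcontra : ∀ x y, blk x = M → blk y = M → lam (bE x) = - lam (bE y) → False := by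
      intro x y hx hy hxy
      refine (c.F2 y hy).not_neg ?_
      have := c.F2 x hx
      rwa [hxy, mul_neg] at this
    rcases hη with rfl | rfl <;> rcases hη' with rfl | rfl <;> push_cast at h5
    · rw [c.inj (hj.trans hj'.symm) (by linear_combination h5)]
    · exact (hcontra j j' hj hj' (by linear_combination h5)).elim
    · exact (hcontra j j' hj hj' (by linear_combination -h5)).elim
    · rw [c.inj (hj.trans hj'.symm) (by linear_combination -h5)]
  · exact absurd (by linear_combination -h1) a1

lemma uniq_CB {i j i' j' : Fin n} {η : ℤ} {β β' : EuclideanSpace ℝ (Fin n)}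
    (h : TyC blk M lam η i j β) (h' : TyB blk M lam i' j' β') (hs : SameInv blk M lam β β') :
    False := by
  have h2 := hs 2 (blk i) h.2.1
  rw [h.dl _ h.2.1, h'.dl, if_pos rfl] at h2
  obtain ⟨-, -, -, -, a1, a2⟩ := h
  refine mul_ne_zero a1 a2 ?_
  split_ifs at h2
  · linear_combination -h2
  · linear_combination -h2

lemma uniq_CD {i j i' j' : Fin n} {η η' : ℤ} {β β' : EuclideanSpace ℝ (Fin n)}
    (h : TyC blk M lam η i j β) (h' : TyD blk M lam η' i' j' β') (hs : SameInv blk M lam β β') :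
    False := by
  have h0 := h'.nonzero
  obtain ⟨hη, hb, hj, -, a⟩ := h'
  rw [← hs 1 _ hj, ← hs 1 _ (hb.trans hj), h.dl _ hj, h.dl _ (hb.trans hj)] at h0
  have hb' := hb.ne
  split_ifs at h0 <;> simp_all

lemma uniq_BD {i j i' j' : Fin n} {η' : ℤ} {β β' : EuclideanSpace ℝ (Fin n)}
    (h : TyB blk M lam i j β) (h' : TyD blk M lam η' i' j' β') (hs : SameInv blk M lam β β') :
    False := by
  have h0 := h'.nonzero
  obtain ⟨hη, hb, hj, -, a⟩ := h'
  rw [← hs 1 _ hj, ← hs 1 _ (hb.trans hj), h.dl, h.dl] at h0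
  have hb' := hb.ne
  split_ifs at h0 <;> simp_all

lemma uniq_BB (c : Ctx S I blk M lam) {i j i' j' : Fin n} {β β' : EuclideanSpace ℝ (Fin n)}
    (h : TyB blk M lam i j β) (h' : TyB blk M lam i' j' β') (hs : SameInv blk M lam β β') :
    β = β' := by
  have h1 := hs 1 (blk i) h.2.1
  have h2 := hs 3 (blk i) h.2.1
  rw [h.dl, h'.dl, if_pos rfl] at h1 h2
  obtain ⟨hij, hi, hj, rfl, a1, a2, a3⟩ := h
  obtain ⟨hij', hi', hj', rfl, -⟩ := h'
  split_ifs at h1 h2 with hb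
  · have h3 : lam (bE i) + lam (bE j) = lam (bE i') + lam (bE j') := by
      linear_combination (-1/2) * h1
    have e1 : lam (bE j') = lam (bE i) + lam (bE j) - lam (bE i') := by linear_combination -h3
    rw [e1] at h2
    have h4 : (lam (bE i') - lam (bE i)) * (lam (bE i') - lam (bE j)) = 0 := by
      apply mul_left_cancel₀ a3
      linear_combination (1/6) * h2
    rcases mul_eq_zero.mp h4 with h5 | h5
    · have h6 : i' = i := c.inj hb (by linear_combination h5)
      have h7 : j' = j := c.inj (by omega) (by linear_combination e1 - h5)
      rw [h6, h7]
    · exfalso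
      have h6 : i' = j := c.inj (by omega) (by linear_combination h5)
      have h7 : j' = i := c.inj (by omega) (by linear_combination e1 - h5)
      rw [h6, h7] at hij'
      exact absurd hij (not_lt.mpr hij'.le)
  · exact absurd (by linear_combination (-1/2) * h1) a3

lemma uniq_DD (c : Ctx S I blk M lam) {i j i' j' : Fin n} {η η' : ℤ}
    {β β' : EuclideanSpace ℝ (Fin n)}
    (h : TyD blk M lam η i j β) (h' : TyD blk M lam η' i' j' β') (hs : SameInv blk M lam β β') :
    β = β' := by
  have hjM := h.2.2.1
  have hiM := h.2.1.trans hjM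
  have hjM' := h'.2.2.1
  have hiM' := h'.2.1.trans hjM'
  have hn := h.nonzero
  have hn' := h'.nonzero
  rw [hs 1 _ hiM, hs 1 _ hjM, h'.dl, h'.dl] at hn
  rw [← hs 1 _ hiM', ← hs 1 _ hjM', h.dl, h.dl] at hn'
  have hbi : blk i = blk i' ∧ blk j = blk j' := by
    have q1 := h.2.1
    have q2 := h'.2.1
    have r1 : blk i' = blk i ∨ blk j' = blk i := by
      by_contra hh; push Not at hh; apply hn.1; rw [if_neg hh.1, if_neg hh.2, add_zero]
    have r2 : blk i' = blk j ∨ blk j' = blk j := by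
      by_contra hh; push Not at hh; apply hn.2; rw [if_neg hh.1, if_neg hh.2, add_zero]
    omega
  have h1 := hs 1 _ hiM
  have h2 := hs 2 _ hiM
  have h1' := hs 1 _ hjM
  have h2' := hs 2 _ hjM
  rw [h.dl, h'.dl] at h1 h2 h1' h2'
  obtain ⟨hη, hi, hj, rfl, a1⟩ := h
  obtain ⟨hη', hi', hj', rfl, a1'⟩ := h'
  rw [if_pos rfl, if_pos hbi.1.symm, if_neg (by omega), if_neg (by omega)] at h1 h2
  rw [if_pos rfl, if_pos hbi.2.symm, if_neg (by omega), if_neg (by omega)] at h1' h2'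
  have h3 : lam (bE i) + η * lam (bE j) = lam (bE i') + η' * lam (bE j') := by
    apply mul_left_cancel₀ a1
    linear_combination (lam (bE i') + η' * lam (bE j')) * h1 - h2
  have h4 : lam (bE i) = lam (bE i') := by linear_combination (1/2) * h3 - (1/2) * h1
  have h5 : η * lam (bE j) = η' * lam (bE j') := by linear_combination (1/2) * h3 + (1/2) * h1
  obtain rfl := c.inj hbi.1 h4
  rcases hη with rfl | rfl <;> rcases hη' with rfl | rfl <;> push_cast at h5 h1' a1 a1'
  · rw [c.inj hbi.2 (by linear_combination h5)]
  · exact absurd (by linear_combination (1/2) * h1' - (1/2) * h5) a1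
  · exact absurd (by linear_combination (-1/2) * h1' - (1/2) * h5) a1
  · rw [c.inj hbi.2 (by linear_combination -h5)]

lemma Ctx.uniq (c : Ctx S I blk M lam) {β β' : EuclideanSpace ℝ (Fin n)}
    (hβ : β ∈ PsiP S (PhiI S I) (S.Φ : Set (EuclideanSpace ℝ (Fin n))) lam)
    (hβ' : β' ∈ PsiP S (PhiI S I) (S.Φ : Set (EuclideanSpace ℝ (Fin n))) lam)
    (hs : SameInv blk M lam β β') :
    β = β' ∨ ∃ i, TyI blk M lam i β ∧ TyI blk M lam i β' := by
  have hs' : SameInv blk M lam β' β := fun p s h => (hs p s h).symm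
  rcases c.classify hβ with ⟨i, h⟩ | ⟨η, i, j, h⟩ | ⟨i, j, h⟩ | ⟨η, i, j, h⟩ <;>
  rcases c.classify hβ' with ⟨i', h'⟩ | ⟨η', i', j', h'⟩ | ⟨i', j', h'⟩ | ⟨η', i', j', h'⟩
  · obtain rfl := uniq_II c h h' hs
    exact Or.inr ⟨i, h, h'⟩
  · exact (uniq_IC h h' hs).elim
  · exact (uniq_IB h h' hs).elim
  · exact (uniq_ID h h' hs).elim
  · exact (uniq_IC h' h hs').elim
  · exact Or.inl (uniq_CC c h h' hs)
  · exact (uniq_CB h h' hs).elim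
  · exact (uniq_CD h h' hs).elim
  · exact (uniq_IB h' h hs').elim
  · exact (uniq_CB h' h hs').elim
  · exact Or.inl (uniq_BB c h h' hs)
  · exact (uniq_BD h h' hs).elim
  · exact (uniq_ID h' h hs').elim
  · exact (uniq_CD h' h hs').elim
  · exact (uniq_BD h' h hs').elim
  · exact Or.inl (uniq_DD c h h' hs)

end ctx

/-- a cancelling pair `e_i`, `e_i + e_j` -/
def Good {n : ℕ} (blk : Fin n → ℕ) (M : ℕ) (lam : HStar (EuclideanSpace ℝ (Fin n)))
    (i j : Fin n) : Prop :=
  IsPosInt (2 * lam (bE i)) ∧ Mate blk M lam i j ∧ (∀ j', Mate blk M lam i j' → j' = j) ∧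
    ∀ k, blk k = blk i → lam (bE k) ≠ - lam (bE i)

lemma rt_neg_one_comm {n : ℕ} (i j : Fin n) : rt (-1) i j = rt (-1) j i := by
  rw [rt_neg_one, rt_neg_one, add_comm]

section ctx
variable {n : ℕ} {S : RootSys (EuclideanSpace ℝ (Fin n))}
    {I : Finset (EuclideanSpace ℝ (Fin n))} {blk : Fin n → ℕ} {M : ℕ}
    {lam : HStar (EuclideanSpace ℝ (Fin n))}

lemma Ctx.mate_refl (c : Ctx S I blk M lam) {i j : Fin n} (h : Mate blk M lam i j) :
    ∃ α ∈ PhiI S I, sRefl (rt (-1) i j) lam = sRefl α (sRefl (bE i) lam) := by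
  obtain ⟨hi, hij, ⟨hb, h0⟩ | ⟨hb, h0⟩⟩ := h
  · refine ⟨rt 1 i j, (c.hPhi _).mpr (Or.inl ⟨i, j, hij, hb.symm, rfl⟩), hstar_ext fun k => ?_⟩
    rw [sRefl_rt (Or.inr rfl) hij, sRefl_rt (Or.inl rfl) hij, sRefl_bE, sRefl_bE, sRefl_bE]
    by_cases h1 : k = i
    · simp [h1, hij.symm, h0]
    · by_cases h2 : k = j <;> simp [h1, h2, hij.symm]
  · refine ⟨bE j, (c.hPhi _).mpr (Or.inr (Or.inr ⟨j, hb, Or.inl rfl⟩)), hstar_ext fun k => ?_⟩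
    rw [sRefl_rt (Or.inr rfl) hij, sRefl_bE, sRefl_bE, sRefl_bE]
    by_cases h1 : k = i
    · simp [h1, hij, h0]
    · by_cases h2 : k = j <;> simp [h1, h2, hij.symm, h0]

lemma Ctx.bE_not_mem (c : Ctx S I blk M lam) {i : Fin n} (hi : blk i < M) : bE i ∉ PhiI S I := by
  intro h
  rcases (c.hPhi _).mp h with ⟨a, b, hab, -, h⟩ | ⟨a, b, hab, -, -, h | h⟩ | ⟨a, ha, h | h⟩
  · have := congrArg (fun v => ∑ k, v k) h
    simp [rt_one, bE_apply, Finset.sum_sub_distrib] at this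
  · exact bE_ne_add i a b (by rw [h, rt_neg_one])
  · have := congrArg (fun v => ∑ k, v k) h
    simp [rt_neg_one, bE_apply, Finset.sum_add_distrib] at this
    norm_num at this
  · rw [bE_injective h] at hi; omega
  · have := congrArg (fun v => ∑ k, v k) h
    simp [bE_apply] at this
    norm_num at this

lemma Ctx.rt_not_mem (c : Ctx S I blk M lam) {i j : Fin n} (hi : blk i < M) :
    rt (-1) i j ∉ PhiI S I := by
  intro h
  rw [rt_neg_one] at h
  rcases (c.hPhi _).mp h with ⟨a, b, hab, -, h⟩ | ⟨a, b, hab, ha, hb, h | h⟩ | ⟨a, ha, h | h⟩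
  · have := congrArg (fun v => ∑ k, v k) h
    simp [rt_one, bE_apply, Finset.sum_sub_distrib, Finset.sum_add_distrib] at this
  · rw [rt_neg_one] at h
    rcases bE_add_eq h with ⟨rfl, rfl⟩ | ⟨rfl, rfl⟩ <;> omega
  · have := congrArg (fun v => ∑ k, v k) h
    simp [rt_neg_one, bE_apply, Finset.sum_add_distrib] at this
    norm_num at this
  · exact bE_ne_add _ _ _ h.symm
  · have := congrArg (fun v => ∑ k, v k) h
    simp [bE_apply, Finset.sum_add_distrib] at this
    norm_num at this

lemma Ctx.bE_mem (c : Ctx S I blk M lam) {i : Fin n} (hi : blk i < M)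
    (h : IsPosInt (2 * lam (bE i))) :
    bE i ∈ PsiP S (PhiI S I) (S.Φ : Set (EuclideanSpace ℝ (Fin n))) lam := by
  have hp : bE i ∈ S.pos := (c.hpos _).mpr (Or.inr ⟨i, rfl⟩)
  refine ⟨⟨S.pos_subset hp, hp⟩, c.bE_not_mem hi, ?_⟩
  rw [coroot_bE, map_smul]
  simpa using h

lemma Ctx.rt_mem (c : Ctx S I blk M lam) {i j : Fin n} (hm : Mate blk M lam i j)
    (h : IsPosInt (2 * lam (bE i))) :
    rt (-1) i j ∈ PsiP S (PhiI S I) (S.Φ : Set (EuclideanSpace ℝ (Fin n))) lam := by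
  have hij := hm.2.1
  have hp : rt (-1) i j ∈ S.pos := by
    rw [c.hpos]
    rcases lt_or_gt_of_ne hij with h1 | h1
    · exact Or.inl ⟨i, j, h1, Or.inr rfl⟩
    · exact Or.inl ⟨j, i, h1, Or.inr (rt_neg_one_comm _ _)⟩
  refine ⟨⟨S.pos_subset hp, hp⟩, c.rt_not_mem hm.1, ?_⟩
  rw [coroot_rt (Or.inr rfl) hij, rt_neg_one, map_add]
  obtain ⟨hi, hij, ⟨hb, h0⟩ | ⟨hb, h0⟩⟩ := hm
  · rw [h0, add_zero]
    rcases lt_or_gt_of_ne hij with h1 | h1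
    · simpa [h0] using c.F1 i j h1 hb.symm
    · exfalso
      have := c.F1 j i h1 hb
      rw [h0, zero_sub] at this
      exact h.not_neg (by simpa [two_mul, add_comm] using this.add this)
  · rwa [h0, ← two_mul]

lemma TyI.mem (c : Ctx S I blk M lam) {i : Fin n} {β : EuclideanSpace ℝ (Fin n)}
    (h : TyI blk M lam i β) :
    β ∈ PsiP S (PhiI S I) (S.Φ : Set (EuclideanSpace ℝ (Fin n))) lam := by
  obtain ⟨hi, hp, rfl | ⟨j, hm, rfl⟩⟩ := h
  · exact c.bE_mem hi hp
  · exact c.rt_mem hm hp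

/-- any type I weight is `W_I`-conjugate to the one of `e_i` -/
lemma TyI.conj (c : Ctx S I blk M lam) {i : Fin n} {β : EuclideanSpace ℝ (Fin n)}
    (h : TyI blk M lam i β) :
    ∃ w ∈ weyl (PhiI S I), sRefl β lam = wAct w (sRefl (bE i) lam) := by
  obtain ⟨hi, hp, rfl | ⟨j, hm, rfl⟩⟩ := h
  · exact ⟨1, one_mem _, (wAct_one _).symm⟩
  · obtain ⟨α, hα, h⟩ := c.mate_refl hm
    exact ⟨reflV α, reflV_mem_weyl S I hα, by rw [h, wAct_reflV]⟩

lemma TyI.conj2 (c : Ctx S I blk M lam) {i : Fin n} {β β' : EuclideanSpace ℝ (Fin n)}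
    (h : TyI blk M lam i β) (h' : TyI blk M lam i β') :
    ∃ w ∈ weyl (PhiI S I), wAct w (sRefl β lam) = sRefl β' lam := by
  obtain ⟨w, hw, h1⟩ := h.conj c
  obtain ⟨w', hw', h1'⟩ := h'.conj c
  refine ⟨w' * w⁻¹, mul_mem hw' (inv_mem hw), ?_⟩
  rw [h1, h1', ← wAct_mul, inv_mul_cancel_right]

lemma Ctx.sameInv (c : Ctx S I blk M lam) {β β' : EuclideanSpace ℝ (Fin n)}
    (h : ∃ w ∈ weyl (PhiI S I), wAct w (sRefl β lam) = sRefl β' lam) : SameInv blk M lam β β' := by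
  obtain ⟨w, hw, h⟩ := h
  intro p s hs
  unfold dl
  rw [← h, c.psum_inv hw _ _ hs]

lemma Ctx.mates_card (c : Ctx S I blk M lam) (i : Fin n) :
    (Finset.univ.filter fun j => Mate blk M lam i j).card ≤ 2 := by
  have h1 : (Finset.univ.filter fun j => Mate blk M lam i j) ⊆
      (Finset.univ.filter fun j => blk j = blk i ∧ lam (bE j) = 0) ∪
      (Finset.univ.filter fun j => blk j = M ∧ lam (bE j) = lam (bE i)) := by
    intro j hj
    simp only [Finset.mem_filter, Finset.mem_union, Finset.mem_univ, true_and] at *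
    exact hj.2.2
  refine (Finset.card_le_card h1).trans ((Finset.card_union_le _ _).trans ?_)
  refine add_le_add (b := 1) (d := 1) ?_ ?_ <;> rw [Finset.card_le_one] <;>
    simp only [Finset.mem_filter, Finset.mem_univ, true_and]
  · intro a ha b hb
    exact c.inj (ha.1.trans hb.1.symm) (ha.2.trans hb.2.symm)
  · intro a ha b hb
    exact c.inj (ha.1.trans hb.1.symm) (ha.2.trans hb.2.symm)

lemma Ctx.reg_block (c : Ctx S I blk M lam) {i : Fin n} {β : EuclideanSpace ℝ (Fin n)}
    (h : TyI blk M lam i β) (hreg : ∀ α ∈ PhiI S I, (sRefl β lam) α ≠ 0) :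
    ∀ k, blk k = blk i → lam (bE k) ≠ - lam (bE i) := by
  intro k hk hL
  have hne := h.ne
  have hki : k ≠ i := by
    rintro rfl
    exact hne (by linear_combination (1/2) * hL)
  obtain ⟨hi, hp, rfl | ⟨j, ⟨-, hij, ⟨hb, h0⟩ | ⟨hb, h0⟩⟩, rfl⟩⟩ := h
  · have := hreg _ ((c.hPhi _).mpr (Or.inl ⟨k, i, hki, hk, rfl⟩))
    rw [rt_one, map_sub, sRefl_bE, sRefl_bE] at this
    simp [hki, hL] at this
  · have hkj : k ≠ j := by
      rintro rfl
      rw [h0] at hL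
      exact hne (by linear_combination hL)
    have := hreg _ ((c.hPhi _).mpr (Or.inl ⟨k, j, hkj, hk.trans hb.symm, rfl⟩))
    rw [rt_one, map_sub, sRefl_rt (Or.inr rfl) hij, sRefl_rt (Or.inr rfl) hij] at this
    simp [hki, hkj, hL, hij.symm] at this
  · have hkj : k ≠ j := by
      rintro rfl
      omega
    have := hreg _ ((c.hPhi _).mpr (Or.inl ⟨k, i, hki, hk, rfl⟩))
    rw [rt_one, map_sub, sRefl_rt (Or.inr rfl) hij, sRefl_rt (Or.inr rfl) hij] at this
    simp [hki, hkj, hL, h0] at this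

/-- `PsiP` as a finset -/
def PF (S : RootSys (EuclideanSpace ℝ (Fin n))) (I : Finset (EuclideanSpace ℝ (Fin n)))
    (lam : HStar (EuclideanSpace ℝ (Fin n))) : Finset (EuclideanSpace ℝ (Fin n)) :=
  S.pos.filter fun β => β ∈ PsiP S (PhiI S I) (S.Φ : Set (EuclideanSpace ℝ (Fin n))) lam

lemma mem_PF {β : EuclideanSpace ℝ (Fin n)} :
    β ∈ PF S I lam ↔ β ∈ PsiP S (PhiI S I) (S.Φ : Set (EuclideanSpace ℝ (Fin n))) lam := by
  simp only [PF, Finset.mem_filter, and_iff_right_iff_imp]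
  exact fun h => h.1.2

lemma sum_PF (g : EuclideanSpace ℝ (Fin n) → HStar (EuclideanSpace ℝ (Fin n)) →₀ ℤ) :
    (∑ᶠ β ∈ PsiP S (PhiI S I) (S.Φ : Set (EuclideanSpace ℝ (Fin n))) lam, g β)
      = ∑ β ∈ PF S I lam, g β := by
  rw [← finsum_mem_coe_finset]
  have : (PF S I lam : Set (EuclideanSpace ℝ (Fin n)))
      = PsiP S (PhiI S I) (S.Φ : Set (EuclideanSpace ℝ (Fin n))) lam := by
    ext β
    exact mem_PF
  rw [this]

/-- cancellation partner relation -/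
def Rel (blk : Fin n → ℕ) (M : ℕ) (lam : HStar (EuclideanSpace ℝ (Fin n)))
    (β β' : EuclideanSpace ℝ (Fin n)) : Prop :=
  ∃ i j, Good blk M lam i j ∧ ((β = bE i ∧ β' = rt (-1) i j) ∨ (β = rt (-1) i j ∧ β' = bE i))

lemma Rel.symm {β β' : EuclideanSpace ℝ (Fin n)} (h : Rel blk M lam β β') : Rel blk M lam β' β := by
  obtain ⟨i, j, hg, h | h⟩ := h
  · exact ⟨i, j, hg, Or.inr ⟨h.2, h.1⟩⟩
  · exact ⟨i, j, hg, Or.inl ⟨h.2, h.1⟩⟩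

lemma Good.ne {i j : Fin n} (h : Good blk M lam i j) : lam (bE i) ≠ 0 := by
  intro h0
  exact h.1.ne_zero (by rw [h0, mul_zero])

lemma Rel.unique {β β₁ β₂ : EuclideanSpace ℝ (Fin n)} (h1 : Rel blk M lam β β₁)
    (h2 : Rel blk M lam β β₂) : β₁ = β₂ := by
  obtain ⟨i, j, hg, ⟨rfl, rfl⟩ | ⟨rfl, rfl⟩⟩ := h1 <;>
  obtain ⟨i', j', hg', ⟨h, rfl⟩ | ⟨h, rfl⟩⟩ := h2
  · obtain rfl := bE_injective h
    rw [hg.2.2.1 _ hg'.2.1]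
  · rw [rt_neg_one] at h
    exact absurd h (bE_ne_add _ _ _)
  · rw [rt_neg_one] at h
    exact absurd h.symm (bE_ne_add _ _ _)
  · rw [rt_neg_one, rt_neg_one] at h
    rcases bE_add_eq h with ⟨rfl, rfl⟩ | ⟨rfl, rfl⟩
    · rfl
    · exfalso
      have hn := hg.ne
      have hn' := hg'.ne
      obtain ⟨hi, -, h⟩ := hg.2.1
      obtain ⟨hi', -, h'⟩ := hg'.2.1
      rcases h with h | h
      · exact hn' h.2
      · omega

lemma Rel.mem (c : Ctx S I blk M lam) {β β' : EuclideanSpace ℝ (Fin n)}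
    (h : Rel blk M lam β β') : β ∈ PF S I lam := by
  rw [mem_PF]
  obtain ⟨i, j, hg, ⟨rfl, rfl⟩ | ⟨rfl, rfl⟩⟩ := h
  · exact c.bE_mem hg.2.1.1 hg.1
  · exact c.rt_mem hg.2.1 hg.1

lemma Rel.theta (c : Ctx S I blk M lam) {β β' : EuclideanSpace ℝ (Fin n)}
    (h : Rel blk M lam β β') :
    JantzenGVM.theta S I (sRefl β lam) + JantzenGVM.theta S I (sRefl β' lam) = 0 := by
  obtain ⟨i, j, hg, ⟨rfl, rfl⟩ | ⟨rfl, rfl⟩⟩ := h <;>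
  · obtain ⟨α, hα, h⟩ := c.mate_refl hg.2.1
    rw [h, theta_sRefl S I hα]
    simp

lemma Rel.ne {β β' : EuclideanSpace ℝ (Fin n)} (h : Rel blk M lam β β') : β' ≠ β := by
  obtain ⟨i, j, hg, ⟨rfl, rfl⟩ | ⟨rfl, rfl⟩⟩ := h
  · rw [rt_neg_one]; exact (bE_ne_add _ _ _).symm
  · rw [rt_neg_one]; exact bE_ne_add _ _ _

theorem Ctx.main_mpr (c : Ctx S I blk M lam)
    (h : ∀ β ∈ PsiPP S (PhiI S I) (S.Φ : Set (EuclideanSpace ℝ (Fin n))) lam,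
      ∃ i j, Good blk M lam i j ∧ (β = bE i ∨ β = rt (-1) i j)) :
    ∑ β ∈ PF S I lam, JantzenGVM.theta S I (sRefl β lam) = 0 := by
  have h0 : ∀ β ∈ PF S I lam, (¬ ∃ β', Rel blk M lam β β') →
      JantzenGVM.theta S I (sRefl β lam) = 0 := by
    intro β hβ hn
    by_contra hne
    apply hn
    obtain ⟨i, j, hg, h1⟩ := h β ⟨mem_PF.mp hβ, fun α hα hz => hne (theta_sing S I hα hz)⟩
    rcases h1 with rfl | rfl
    · exact ⟨_, i, j, hg, Or.inl ⟨rfl, rfl⟩⟩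
    · exact ⟨_, i, j, hg, Or.inr ⟨rfl, rfl⟩⟩
  let p : EuclideanSpace ℝ (Fin n) → EuclideanSpace ℝ (Fin n) := fun β =>
    if h : ∃ β', Rel blk M lam β β' then h.choose else β
  have hp : ∀ β, (∃ β', Rel blk M lam β β') → Rel blk M lam β (p β) := by
    intro β hβ
    simp only [p, dif_pos hβ]
    exact hβ.choose_spec
  have hp0 : ∀ β, (¬ ∃ β', Rel blk M lam β β') → p β = β := by
    intro β hβ
    simp only [p, dif_neg hβ]
  refine Finset.sum_involution (fun β _ => p β) ?_ ?_ ?_ ?_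
  · intro β hβ
    by_cases hr : ∃ β', Rel blk M lam β β'
    · exact (hp β hr).theta c
    · rw [hp0 β hr, h0 β hβ hr, add_zero]
  · intro β hβ hne
    by_cases hr : ∃ β', Rel blk M lam β β'
    · exact (hp β hr).ne
    · exact absurd (h0 β hβ hr) hne
  · intro β hβ
    by_cases hr : ∃ β', Rel blk M lam β β'
    · exact (hp β hr).symm.mem c
    · rw [hp0 β hr]; exact hβ
  · intro β hβ
    by_cases hr : ∃ β', Rel blk M lam β β'
    · have h1 := (hp β hr).symm
      exact (hp _ ⟨_, h1⟩).unique h1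
    · rw [hp0 β hr, hp0 β hr]

theorem Ctx.main_mp (c : Ctx S I blk M lam)
    (h : ∑ β ∈ PF S I lam, JantzenGVM.theta S I (sRefl β lam) = 0)
    (β₀ : EuclideanSpace ℝ (Fin n))
    (hβ₀ : β₀ ∈ PsiPP S (PhiI S I) (S.Φ : Set (EuclideanSpace ℝ (Fin n))) lam) :
    ∃ i j, Good blk M lam i j ∧ (β₀ = bE i ∨ β₀ = rt (-1) i j) := by
  obtain ⟨hP, hreg⟩ := hβ₀
  have hst := c.stab hreg
  set N := (PF S I lam).filter fun β =>
    ∃ w ∈ weyl (PhiI S I), wAct w (sRefl β lam) = sRefl β₀ lam with hN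
  have hcard : ((N.card : ℕ) : ZMod 2) = 0 := by
    have h1 := DFunLike.congr_fun h (sRefl β₀ lam)
    rw [Finsupp.finsetSum_apply] at h1
    have h2 := congrArg (fun z : ℤ => (z : ZMod 2)) h1
    simp only [Int.cast_sum, Finsupp.coe_zero, Pi.zero_apply, Int.cast_zero] at h2
    rw [← h2, hN, Finset.card_filter, Nat.cast_sum]
    refine Finset.sum_congr rfl fun β hβ => ?_
    split_ifs with hw
    · rw [theta_coeff_odd S I hst hw]; simp
    · rw [theta_coeff_zero S I hw]; simp
  have hβN : β₀ ∈ N := by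
    rw [hN, Finset.mem_filter, mem_PF]
    exact ⟨hP, 1, one_mem _, wAct_one _⟩
  have hNu : ∀ β ∈ N, β = β₀ ∨ ∃ i, TyI blk M lam i β ∧ TyI blk M lam i β₀ := by
    intro β hβ
    rw [hN, Finset.mem_filter, mem_PF] at hβ
    exact c.uniq hβ.1 hP (c.sameInv hβ.2)
  by_cases hT : ∃ i, TyI blk M lam i β₀
  swap
  · exfalso
    have : N = {β₀} := by
      rw [Finset.eq_singleton_iff_unique_mem]
      refine ⟨hβN, fun β hβ => ?_⟩
      rcases hNu β hβ with h1 | ⟨i, -, h1⟩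
      · exact h1
      · exact absurd ⟨i, h1⟩ hT
    rw [this] at hcard
    simp at hcard
  obtain ⟨i, hT⟩ := hT
  set A := Finset.univ.filter fun j => Mate blk M lam i j with hA
  have hNA : N = insert (bE i) (A.image fun j => rt (-1) i j) := by
    ext β
    have h1 : β ∈ N ↔ TyI blk M lam i β := by
      constructor
      · intro hβ
        rcases hNu β hβ with rfl | ⟨i', h1, h2⟩
        · exact hT
        · have : i' = i := uniq_II c h2 hT (fun _ _ _ => rfl)
          rwa [this] at h1
      · intro hβ
        rw [hN, Finset.mem_filter, mem_PF]
        exact ⟨hβ.mem c, hβ.conj2 c hT⟩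
    rw [h1, Finset.mem_insert, Finset.mem_image]
    simp only [TyI, hT.1, hT.2.1, true_and, hA, Finset.mem_filter, Finset.mem_univ, eq_comm]
  have hinj : Set.InjOn (fun j => rt (-1) i j) (A : Set (Fin n)) := by
    intro a _ b _ hab
    simp only [rt_neg_one] at hab
    exact bE_injective (add_left_cancel hab)
  have hNc : N.card = A.card + 1 := by
    rw [hNA, Finset.card_insert_of_notMem, Finset.card_image_of_injOn hinj]
    rw [Finset.mem_image]
    rintro ⟨j, -, hj⟩
    rw [rt_neg_one] at hj
    exact bE_ne_add _ _ _ hj.symm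
  rw [hNc, ZMod.natCast_eq_zero_iff] at hcard
  have h2 := c.mates_card i
  rw [← hA] at h2
  have h3 : A.card = 1 := by omega
  obtain ⟨j, hj⟩ := Finset.card_eq_one.mp h3
  have hmem : ∀ j', Mate blk M lam i j' ↔ j' = j := by
    intro j'
    rw [← Finset.mem_singleton, ← hj, hA]
    simp
  refine ⟨i, j, ⟨hT.2.1, (hmem j).mpr rfl, fun j' => (hmem j').mp, c.reg_block hT hreg⟩, ?_⟩
  rcases hT.2.2 with h1 | ⟨j', h1, h2⟩
  · exact Or.inl h1
  · rw [(hmem j').mp h1] at h2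
    exact Or.inr h2

theorem Ctx.main (c : Ctx S I blk M lam) :
    (∑ᶠ β ∈ PsiP S (PhiI S I) (S.Φ : Set (EuclideanSpace ℝ (Fin n))) lam,
        JantzenGVM.theta S I (sRefl β lam)) = 0 ↔
    ∀ β ∈ PsiPP S (PhiI S I) (S.Φ : Set (EuclideanSpace ℝ (Fin n))) lam,
      ∃ i j, Good blk M lam i j ∧ (β = bE i ∨ β = rt (-1) i j) := by
  rw [sum_PF]
  exact ⟨fun h => c.main_mp h, c.main_mpr⟩

end ctx


/-! ### Translation from the standard realization -/

lemma stdE_succ {n : ℕ} (k : Fin n) : stdE n (k.val + 1) = bE k := by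
  unfold stdE bE
  rw [dif_pos ⟨by omega, k.2⟩]
  rfl

lemma stdE_ex {n i : ℕ} (h1 : 1 ≤ i) (h2 : i ≤ n) : ∃ k : Fin n, i = k.val + 1 ∧ stdE n i = bE k := by
  refine ⟨⟨i - 1, by omega⟩, by simp; omega, ?_⟩
  rw [← stdE_succ]
  congr 1
  simp; omega

/-- the block of an index -/
def blkOf {n : ℕ} (m : ℕ) (q : ℕ → ℕ) (k : Fin n) : ℕ :=
  ((Finset.Icc 1 (m - 1)).filter fun s => q s ≤ k.val).card

lemma q_mono {m : ℕ} {q : ℕ → ℕ} (hmono : ∀ s : ℕ, 1 ≤ s → s ≤ m - 1 → q (s - 1) < q s)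
    {s t : ℕ} (hst : s ≤ t) (ht : t ≤ m - 1) : q s ≤ q t := by
  induction t, hst using Nat.le_induction with
  | base => exact le_rfl
  | succ t hst ih =>
    have := hmono (t + 1) (by omega) ht
    simp only [Nat.add_sub_cancel] at this
    exact (ih (by omega)).trans this.le

lemma blkOf_le {n : ℕ} (m : ℕ) (q : ℕ → ℕ) (k : Fin n) : blkOf m q k ≤ m - 1 := by
  unfold blkOf
  refine (Finset.card_filter_le _ _).trans ?_
  simp

lemma le_blkOf {n m : ℕ} {q : ℕ → ℕ}
    (hmono : ∀ s : ℕ, 1 ≤ s → s ≤ m - 1 → q (s - 1) < q s) (k : Fin n) {s : ℕ} (h1 : 1 ≤ s)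
    (h2 : s ≤ m - 1) : s ≤ blkOf m q k ↔ q s ≤ k.val := by
  unfold blkOf
  constructor
  · intro h
    by_contra hlt
    have hsub : ((Finset.Icc 1 (m - 1)).filter fun s => q s ≤ k.val) ⊆ Finset.Icc 1 (s - 1) := by
      intro t ht
      simp only [Finset.mem_filter, Finset.mem_Icc] at *
      refine ⟨ht.1.1, ?_⟩
      by_contra hts
      have := q_mono hmono (show s ≤ t by omega) ht.1.2
      omega
    have := Finset.card_le_card hsub
    rw [Nat.card_Icc] at this
    omega
  · intro h
    have hsub : Finset.Icc 1 s ⊆ ((Finset.Icc 1 (m - 1)).filter fun s => q s ≤ k.val) := by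
      intro t ht
      simp only [Finset.mem_filter, Finset.mem_Icc] at *
      exact ⟨⟨ht.1, by omega⟩, (q_mono hmono ht.2 h2).trans h⟩
    have := Finset.card_le_card hsub
    rw [Nat.card_Icc] at this
    omega

lemma blkOf_mono {n : ℕ} (m : ℕ) (q : ℕ → ℕ) : Monotone (blkOf (n := n) m q) := by
  intro k k' h
  refine Finset.card_le_card ?_
  intro t ht
  simp only [Finset.mem_filter] at *
  exact ⟨ht.1, ht.2.trans h⟩

lemma chain {n : ℕ} {blk : Fin n → ℕ} (hm : Monotone blk) (P : Fin n → Fin n → Prop)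
    (htr : ∀ a b d, P a b → P b d → P a d)
    (hstep : ∀ k k' : Fin n, k'.val = k.val + 1 → blk k = blk k' → P k k') :
    ∀ i j, i < j → blk i = blk j → P i j := by
  have key : ∀ d : ℕ, ∀ i j : Fin n, j.val = i.val + d + 1 → blk i = blk j → P i j := by
    intro d
    induction d with
    | zero => intro i j h hb; exact hstep i j (by omega) hb
    | succ d ih =>
      intro i j h hb
      have hlt : i.val + d + 1 < n := by omega
      let b : Fin n := ⟨i.val + d + 1, hlt⟩
      have h1 : blk i ≤ blk b := hm (by rw [Fin.le_def]; simp [b]; omega)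
      have h2 : blk b ≤ blk j := hm (by rw [Fin.le_def]; simp [b]; omega)
      exact htr i b j (ih i b rfl (by omega)) (hstep b j (by simp [b]; omega) (by omega))
  intro i j hij hb
  exact key (j.val - i.val - 1) i j (by have : i.val < j.val := hij; omega) hb

lemma bcdAlpha_lt {n : ℕ} {k k' : Fin n} (h : k'.val = k.val + 1) :
    bcdAlpha BCD.B n (k.val + 1) = bE k - bE k' := by
  unfold bcdAlpha
  rw [if_pos (by have := k'.2; omega), stdE_succ, ← h, stdE_succ]

lemma bcdAlpha_last {n : ℕ} {k : Fin n} (h : k.val + 1 = n) :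
    bcdAlpha BCD.B n (k.val + 1) = bE k := by
  have : bcdAlpha BCD.B n (k.val + 1) = stdE n n := by
    unfold bcdAlpha
    rw [if_neg (by omega)]
  rw [this, ← stdE_succ, h]

lemma alpha_cases {n t : ℕ} (h1 : 1 ≤ t) (h2 : t ≤ n) :
    (∃ k k' : Fin n, k'.val = k.val + 1 ∧ t = k.val + 1 ∧ bcdAlpha BCD.B n t = bE k - bE k') ∨
    ∃ k : Fin n, k.val + 1 = n ∧ t = k.val + 1 ∧ bcdAlpha BCD.B n t = bE k := by
  obtain ⟨k, rfl, -⟩ := stdE_ex h1 h2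
  by_cases h : k.val + 1 < n
  · exact Or.inl ⟨k, ⟨k.val + 1, h⟩, rfl, rfl, bcdAlpha_lt rfl⟩
  · have : k.val + 1 = n := by omega
    exact Or.inr ⟨k, this, rfl, bcdAlpha_last this⟩

lemma alpha_inj_lt {n t : ℕ} (h1 : 1 ≤ t) (h2 : t ≤ n) {k k' : Fin n} (h : k'.val = k.val + 1)
    (he : bE k - bE k' = bcdAlpha BCD.B n t) : t = k.val + 1 := by
  rcases alpha_cases h1 h2 with ⟨a, a', ha, rfl, hb⟩ | ⟨a, ha, rfl, hb⟩
  · rw [hb, sub_eq_sub_iff_add_eq_add] at he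
    rcases bE_add_eq he with ⟨rfl, -⟩ | ⟨rfl, -⟩
    · rfl
    · omega
  · rw [hb, sub_eq_iff_eq_add] at he
    exact absurd he (bE_ne_add _ _ _)

lemma alpha_inj_last {n t : ℕ} (h1 : 1 ≤ t) (h2 : t ≤ n) {k : Fin n} (h : k.val + 1 = n)
    (he : bE k = bcdAlpha BCD.B n t) : t = n := by
  rcases alpha_cases h1 h2 with ⟨a, a', ha, rfl, hb⟩ | ⟨a, ha, rfl, hb⟩
  · rw [hb, eq_sub_iff_add_eq] at he
    exact absurd he.symm (bE_ne_add _ _ _)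
  · exact ha

lemma pos_iff {n : ℕ} (v : EuclideanSpace ℝ (Fin n)) : v ∈ bcdPos BCD.B n ↔
    (∃ i j : Fin n, i < j ∧ (v = rt 1 i j ∨ v = rt (-1) i j)) ∨ ∃ i, v = bE i := by
  simp only [bcdPos, Set.mem_setOf_eq, rt_one, rt_neg_one]
  constructor
  · rintro (⟨i, j, h1, h2, h3, h⟩ | ⟨i, h1, h2, h⟩)
    · obtain ⟨a, ha, ha'⟩ := stdE_ex h1 (by omega : i ≤ n)
      obtain ⟨b, hb, hb'⟩ := stdE_ex (by omega : 1 ≤ j) h3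
      rw [ha', hb'] at h
      exact Or.inl ⟨a, b, by rw [Fin.lt_def]; omega, h⟩
    · obtain ⟨a, ha, ha'⟩ := stdE_ex h1 h2
      exact Or.inr ⟨a, by rw [h, ha']⟩
  · rintro (⟨i, j, h1, h⟩ | ⟨i, h⟩)
    · rw [← stdE_succ i, ← stdE_succ j] at h
      have : i.val < j.val := h1
      exact Or.inl ⟨_, _, by omega, by omega, j.2, h⟩
    · rw [← stdE_succ i] at h
      exact Or.inr ⟨_, by omega, i.2, h⟩

lemma roots_iff {n : ℕ} (v : EuclideanSpace ℝ (Fin n)) : v ∈ bcdRoots BCD.B n ↔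
    (∃ i j : Fin n, i ≠ j ∧ v = rt 1 i j) ∨
    (∃ i j : Fin n, i ≠ j ∧ (v = rt (-1) i j ∨ v = - rt (-1) i j)) ∨
    ∃ i : Fin n, v = bE i ∨ v = - bE i := by
  simp only [bcdRoots, Set.mem_setOf_eq, rt_one, rt_neg_one]
  constructor
  · rintro (⟨i, j, h1, h2, h3, h⟩ | ⟨i, h1, h2, h⟩)
    · obtain ⟨a, ha, ha'⟩ := stdE_ex h1 (by omega : i ≤ n)
      obtain ⟨b, hb, hb'⟩ := stdE_ex (by omega : 1 ≤ j) h3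
      have hab : a ≠ b := by rintro rfl; omega
      rw [ha', hb'] at h
      rcases h with h | h | h | h
      · exact Or.inl ⟨a, b, hab, h⟩
      · exact Or.inl ⟨b, a, hab.symm, by rw [h, neg_sub]⟩
      · exact Or.inr (Or.inl ⟨a, b, hab, Or.inl h⟩)
      · exact Or.inr (Or.inl ⟨a, b, hab, Or.inr h⟩)
    · obtain ⟨a, ha, ha'⟩ := stdE_ex h1 h2
      exact Or.inr (Or.inr ⟨a, by rwa [ha'] at h⟩)
  · rintro (⟨i, j, hij, h⟩ | ⟨i, j, hij, h⟩ | ⟨i, h⟩)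
    · rw [← stdE_succ i, ← stdE_succ j] at h
      rcases lt_or_gt_of_ne hij with hij | hij
      · have : i.val < j.val := hij
        exact Or.inl ⟨_, _, by omega, by omega, j.2, Or.inl h⟩
      · have : j.val < i.val := hij
        exact Or.inl ⟨j.val + 1, i.val + 1, by omega, by omega, i.2, Or.inr (Or.inl (by rw [h, neg_sub]))⟩
    · rw [← stdE_succ i, ← stdE_succ j] at h
      rcases lt_or_gt_of_ne hij with hij | hij
      · have : i.val < j.val := hij
        exact Or.inl ⟨_, _, by omega, by omega, j.2, Or.inr (Or.inr h)⟩
      · have : j.val < i.val := hij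
        rw [add_comm] at h
        exact Or.inl ⟨j.val + 1, i.val + 1, by omega, by omega, i.2, Or.inr (Or.inr h)⟩
    · rw [← stdE_succ i] at h
      exact Or.inr ⟨_, by omega, i.2, h⟩

lemma simple_iff {n : ℕ} (hn : 1 ≤ n) (v : EuclideanSpace ℝ (Fin n)) : v ∈ bcdSimple BCD.B n ↔
    (∃ k k' : Fin n, k'.val = k.val + 1 ∧ v = bE k - bE k') ∨
    ∃ k : Fin n, k.val + 1 = n ∧ v = bE k := by
  simp only [bcdSimple, Set.mem_setOf_eq]
  constructor
  · rintro (⟨i, h1, h2, h⟩ | h)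
    · obtain ⟨a, ha, ha'⟩ := stdE_ex h1 h2.le
      obtain ⟨b, hb, hb'⟩ := stdE_ex (by omega : 1 ≤ i + 1) h2
      exact Or.inl ⟨a, b, by omega, by rw [h, ha', hb']⟩
    · obtain ⟨a, ha, ha'⟩ := stdE_ex hn le_rfl
      exact Or.inr ⟨a, ha.symm, by rw [h, ha']⟩
  · rintro (⟨k, k', h1, h⟩ | ⟨k, h1, h⟩)
    · refine Or.inl ⟨k.val + 1, by omega, by have := k'.2; omega, ?_⟩
      rw [h, stdE_succ, ← h1, stdE_succ]
    · right
      rw [h, ← stdE_succ, h1]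

/-- sum of the first coordinates -/
def fs {n : ℕ} (t : ℕ) : EuclideanSpace ℝ (Fin n) →+ ℝ where
  toFun v := ∑ k : Fin n, if k.val < t then v k else 0
  map_zero' := by simp
  map_add' x y := by
    rw [← Finset.sum_add_distrib]
    refine Finset.sum_congr rfl fun k _ => ?_
    split_ifs <;> simp

lemma fs_bE {n : ℕ} (t : ℕ) (k : Fin n) : fs t (bE k) = if k.val < t then (1 : ℝ) else 0 := by
  simp only [fs, AddMonoidHom.coe_mk, ZeroHom.coe_mk, bE_apply]
  rw [Finset.sum_eq_single k]
  · simp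
  · intro b _ hb; simp [hb]
  · simp

theorem ctx_of (n : ℕ)
    (S : RootSys (EuclideanSpace ℝ (Fin n)))
    (hΦ : (S.Φ : Set (EuclideanSpace ℝ (Fin n))) = bcdRoots BCD.B n)
    (hpos : (S.pos : Set (EuclideanSpace ℝ (Fin n))) = bcdPos BCD.B n)
    (hΔ : (S.Δ : Set (EuclideanSpace ℝ (Fin n))) = bcdSimple BCD.B n)
    (I : Finset (EuclideanSpace ℝ (Fin n))) (hI : I ⊆ S.Δ)
    (m : ℕ) (q : ℕ → ℕ)
    (hmono : ∀ s : ℕ, 1 ≤ s → s ≤ m - 1 → q (s - 1) < q s)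
    (hqn : q (m - 1) ≤ n)
    (hcompl : (S.Δ : Set (EuclideanSpace ℝ (Fin n))) \ (I : Set (EuclideanSpace ℝ (Fin n))) =
      {v | ∃ s : ℕ, 1 ≤ s ∧ s ≤ m - 1 ∧ v = bcdAlpha BCD.B n (q s)})
    (lam : HStar (EuclideanSpace ℝ (Fin n)))
    (hlam : lam ∈ LambdaP (I : Set (EuclideanSpace ℝ (Fin n)))) :
    Ctx S I (blkOf m q) (m - 1) lam := by
  have hn : 1 ≤ n := by
    by_contra h0
    obtain rfl : n = 0 := by omega
    have h1 : stdE 0 0 ∈ S.Δ := by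
      have : stdE 0 0 ∈ (S.Δ : Set (EuclideanSpace ℝ (Fin 0))) := by rw [hΔ]; exact Or.inr rfl
      exact this
    exact S.ne_zero _ (S.pos_subset (S.simple_subset h1)) (Subsingleton.elim _ _)
  have hlast : ∃ z : Fin n, z.val + 1 = n := ⟨⟨n - 1, by omega⟩, by simp; omega⟩
  obtain ⟨z, hz⟩ := hlast
  have hqr : ∀ s, 1 ≤ s → s ≤ m - 1 → 1 ≤ q s ∧ q s ≤ n := by
    intro s h1 h2
    have := hmono s h1 h2
    have := q_mono hmono h2 le_rfl
    omega
  have hmemΔ : ∀ v, v ∈ S.Δ ↔ v ∈ bcdSimple BCD.B n := by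
    intro v; rw [← hΔ]; rfl
  have hnotI : ∀ v, v ∈ S.Δ → v ∉ I → ∃ s : ℕ, 1 ≤ s ∧ s ≤ m - 1 ∧ v = bcdAlpha BCD.B n (q s) := by
    intro v h1 h2
    have : v ∈ (S.Δ : Set (EuclideanSpace ℝ (Fin n))) \ (I : Set (EuclideanSpace ℝ (Fin n))) :=
      ⟨h1, h2⟩
    rwa [hcompl] at this
  have hInot : ∀ s : ℕ, 1 ≤ s → s ≤ m - 1 → bcdAlpha BCD.B n (q s) ∉ I := by
    intro s h1 h2
    have : bcdAlpha BCD.B n (q s) ∈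
        (S.Δ : Set (EuclideanSpace ℝ (Fin n))) \ (I : Set (EuclideanSpace ℝ (Fin n))) := by
      rw [hcompl]; exact ⟨s, h1, h2, rfl⟩
    exact this.2
  have hstepI : ∀ k k' : Fin n, k'.val = k.val + 1 → blkOf m q k = blkOf m q k' →
      bE k - bE k' ∈ I := by
    intro k k' hk hb
    by_contra hni
    obtain ⟨s, h1, h2, h3⟩ := hnotI _
      ((hmemΔ _).mpr ((simple_iff hn _).mpr (Or.inl ⟨k, k', hk, rfl⟩))) hni
    have h4 := alpha_inj_lt (hqr s h1 h2).1 (hqr s h1 h2).2 hk h3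
    have h5 := le_blkOf hmono k h1 h2
    have h6 := le_blkOf hmono k' h1 h2
    rw [hb] at h5
    omega
  have hzI : blkOf m q z = m - 1 → bE z ∈ I := by
    intro hb
    by_contra hni
    obtain ⟨s, h1, h2, h3⟩ := hnotI _
      ((hmemΔ _).mpr ((simple_iff hn _).mpr (Or.inr ⟨z, hz, rfl⟩))) hni
    have h4 := alpha_inj_last (hqr s h1 h2).1 (hqr s h1 h2).2 hz h3
    have h5 := le_blkOf hmono z h1 h2
    omega
  have hzmax : ∀ k : Fin n, blkOf m q k = m - 1 → blkOf m q z = m - 1 := by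
    intro k hk
    have h1 : blkOf m q k ≤ blkOf m q z := blkOf_mono m q (by rw [Fin.le_def]; have := k.2; omega)
    have h2 := blkOf_le m q z
    omega
  have F1 : ∀ i j : Fin n, i < j → blkOf m q i = blkOf m q j →
      IsPosInt (lam (bE i) - lam (bE j)) := by
    refine chain (blkOf_mono m q) _ ?_ ?_
    · intro a b d h1 h2
      simpa using h1.add h2
    · intro k k' hk hb
      have h1 := hlam _ (hstepI k k' hk hb)
      have hne : k ≠ k' := by rintro rfl; omega
      rwa [← rt_one, coroot_rt (Or.inl rfl) hne, rt_one, map_sub] at h1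
  have F2 : ∀ i : Fin n, blkOf m q i = m - 1 → IsPosInt (2 * lam (bE i)) := by
    intro i hi
    have h1 := hlam _ (hzI (hzmax i hi))
    rw [coroot_bE, map_smul] at h1
    have h2 : IsPosInt (2 * lam (bE z)) := by simpa using h1
    by_cases hiz : i = z
    · rwa [hiz]
    · have h3 := F1 i z (lt_of_le_of_ne (by rw [Fin.le_def]; have := i.2; omega) hiz)
        (hi.trans (hzmax i hi).symm)
      have := (h3.add h3).add h2
      convert this using 1
      ring
  have hsp1 : ∀ i j : Fin n, i < j → blkOf m q i = blkOf m q j →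
      bE i - bE j ∈ Submodule.span ℤ (I : Set (EuclideanSpace ℝ (Fin n))) := by
    refine chain (blkOf_mono m q) _ ?_ ?_
    · intro a b d h1 h2
      simpa using add_mem h1 h2
    · intro k k' hk hb
      exact Submodule.subset_span (hstepI k k' hk hb)
  have hsp2 : ∀ i : Fin n, blkOf m q i = m - 1 →
      bE i ∈ Submodule.span ℤ (I : Set (EuclideanSpace ℝ (Fin n))) := by
    intro i hi
    have h2 : bE z ∈ Submodule.span ℤ (I : Set (EuclideanSpace ℝ (Fin n))) :=
      Submodule.subset_span (hzI (hzmax i hi))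
    by_cases hiz : i = z
    · rwa [hiz]
    · have h3 := hsp1 i z (lt_of_le_of_ne (by rw [Fin.le_def]; have := i.2; omega) hiz)
        (hi.trans (hzmax i hi).symm)
      simpa using add_mem h3 h2
  have hfs : ∀ s, 1 ≤ s → s ≤ m - 1 →
      ∀ v ∈ Submodule.span ℤ (I : Set (EuclideanSpace ℝ (Fin n))), fs (q s) v = 0 := by
    intro s h1 h2 v hv
    induction hv using Submodule.span_induction with
    | zero => exact map_zero _
    | add x y _ _ hx hy => rw [map_add, hx, hy, add_zero]
    | smul a x _ hx => rw [map_zsmul, hx, smul_zero]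
    | mem x hx =>
      have hxΔ := hI hx
      have hna := hInot s h1 h2
      have hq := hqr s h1 h2
      rcases (simple_iff hn _).mp ((hmemΔ _).mp hxΔ) with ⟨k, k', hk, rfl⟩ | ⟨k, hk, rfl⟩
      · have : q s ≠ k.val + 1 := by
          intro he
          rw [he, bcdAlpha_lt hk] at hna
          exact hna hx
        rw [map_sub, fs_bE, fs_bE]
        by_cases h3 : k.val < q s
        · rw [if_pos h3, if_pos (by omega), sub_self]
        · rw [if_neg h3, if_neg (by omega), sub_self]
      · have : q s ≠ k.val + 1 := by
          intro he
          rw [he, bcdAlpha_last hk] at hna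
          exact hna hx
        rw [fs_bE, if_neg (by omega)]
  have hlt : ∀ s, 1 ≤ s → s ≤ m - 1 → ∀ k : Fin n, (k.val < q s ↔ blkOf m q k < s) := by
    intro s h1 h2 k
    have := le_blkOf hmono k h1 h2
    omega
  have hout : ∀ v ∈ Submodule.span ℤ (I : Set (EuclideanSpace ℝ (Fin n))),
      ∀ s, 1 ≤ s → s ≤ m - 1 → ∀ t : ℝ, fs (q s) v = t → t = 0 := by
    intro v hv s h1 h2 t ht
    rw [← ht, hfs s h1 h2 v hv]
  have hob : ∀ i : Fin n,
      bE i ∈ Submodule.span ℤ (I : Set (EuclideanSpace ℝ (Fin n))) → blkOf m q i = m - 1 := by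
    intro i h
    by_contra hne
    have hle := blkOf_le m q i
    have := hfs (m - 1) (by omega) le_rfl _ h
    rw [fs_bE, if_pos ((hlt (m - 1) (by omega) le_rfl i).mpr (by omega))] at this
    exact one_ne_zero this
  have hoa : ∀ i j : Fin n,
      bE i + bE j ∈ Submodule.span ℤ (I : Set (EuclideanSpace ℝ (Fin n))) →
        blkOf m q i = m - 1 := by
    intro i j h
    by_contra hne
    have hle := blkOf_le m q i
    have := hfs (m - 1) (by omega) le_rfl _ h
    rw [map_add, fs_bE, fs_bE,
      if_pos ((hlt (m - 1) (by omega) le_rfl i).mpr (by omega))] at this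
    split_ifs at this <;> norm_num at this
  have hos : ∀ i j : Fin n,
      bE i - bE j ∈ Submodule.span ℤ (I : Set (EuclideanSpace ℝ (Fin n))) →
        blkOf m q i ≤ blkOf m q j := by
    intro i j h
    by_contra hne
    have hle := blkOf_le m q i
    have := hfs (blkOf m q i) (by omega) hle _ h
    rw [map_sub, fs_bE, fs_bE, if_neg (by rw [hlt _ (by omega) hle]; omega),
      if_pos (by rw [hlt _ (by omega) hle]; omega)] at this
    norm_num at this
  have hmemΦ : ∀ v, v ∈ S.Φ ↔ v ∈ bcdRoots BCD.B n := by
    intro v; rw [← hΦ]; rfl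
  refine ⟨?_, ?_, blkOf_mono m q, blkOf_le m q, F1, F2⟩
  · intro v
    rw [← pos_iff, ← hpos]; rfl
  · intro v
    change v ∈ S.Φ ∧ v ∈ Submodule.span ℤ (I : Set (EuclideanSpace ℝ (Fin n))) ↔ _
    constructor
    · rintro ⟨h1, h2⟩
      rcases (roots_iff v).mp ((hmemΦ v).mp h1) with ⟨i, j, hij, rfl⟩ | ⟨i, j, hij, h⟩ | ⟨i, h⟩
      · rw [rt_one] at h2
        have h3 : bE j - bE i ∈ Submodule.span ℤ (I : Set (EuclideanSpace ℝ (Fin n))) := by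
          rw [← neg_sub]; exact neg_mem h2
        exact Or.inl ⟨i, j, hij, le_antisymm (hos i j h2) (hos j i h3), rfl⟩
      · have h3 : bE i + bE j ∈ Submodule.span ℤ (I : Set (EuclideanSpace ℝ (Fin n))) := by
          rcases h with rfl | rfl
          · rwa [rt_neg_one] at h2
          · rwa [rt_neg_one, neg_mem_iff] at h2
        exact Or.inr (Or.inl ⟨i, j, hij, hoa i j h3, hoa j i (by rwa [add_comm] at h3), h⟩)
      · have h3 : bE i ∈ Submodule.span ℤ (I : Set (EuclideanSpace ℝ (Fin n))) := by
          rcases h with rfl | rfl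
          · exact h2
          · rwa [neg_mem_iff] at h2
        exact Or.inr (Or.inr ⟨i, hob i h3, h⟩)
    · intro h
      refine ⟨(hmemΦ v).mpr ((roots_iff v).mpr ?_), ?_⟩
      · rcases h with ⟨i, j, hij, -, h⟩ | ⟨i, j, hij, -, -, h⟩ | ⟨i, -, h⟩
        · exact Or.inl ⟨i, j, hij, h⟩
        · exact Or.inr (Or.inl ⟨i, j, hij, h⟩)
        · exact Or.inr (Or.inr ⟨i, h⟩)
      · rcases h with ⟨i, j, hij, hb, rfl⟩ | ⟨i, j, hij, hi, hj, h⟩ | ⟨i, hi, h⟩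
        · rw [rt_one]
          rcases lt_or_gt_of_ne hij with h1 | h1
          · exact hsp1 i j h1 hb
          · rw [← neg_sub]
            exact neg_mem (hsp1 j i h1 hb.symm)
        · have h3 := add_mem (hsp2 i hi) (hsp2 j hj)
          rcases h with rfl | rfl
          · rwa [rt_neg_one]
          · rwa [rt_neg_one, neg_mem_iff]
        · rcases h with rfl | rfl
          · exact hsp2 i hi
          · exact neg_mem (hsp2 i hi)


lemma blk_iff {n m : ℕ} {q : ℕ → ℕ} (hq0 : q 0 = 0)
    (hmono : ∀ s : ℕ, 1 ≤ s → s ≤ m - 1 → q (s - 1) < q s) (k : Fin n) {s : ℕ} (h1 : 1 ≤ s)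
    (h2 : s < m) : blkOf m q k + 1 = s ↔ (q (s - 1) < k.val + 1 ∧ k.val + 1 ≤ q s) := by
  have a := le_blkOf hmono k h1 (by omega)
  by_cases h3 : s = 1
  · subst h3
    simp only [Nat.sub_self, hq0]
    omega
  · have b := le_blkOf hmono k (s := s - 1) (by omega) (by omega)
    omega

lemma blk_last {n m : ℕ} {q : ℕ → ℕ} (hq0 : q 0 = 0)
    (hmono : ∀ s : ℕ, 1 ≤ s → s ≤ m - 1 → q (s - 1) < q s) (k : Fin n) :
    blkOf m q k = m - 1 ↔ q (m - 1) < k.val + 1 := by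
  have h0 := blkOf_le m q k
  by_cases h : m - 1 = 0
  · rw [h, hq0]
    omega
  · have a := le_blkOf hmono k (s := m - 1) (by omega) le_rfl
    omega

lemma half_iff {z : ℂ} : IsPosInt (2 * z) ↔ ∃ k : ℤ, 0 < k ∧ z = (k : ℂ) / 2 := by
  constructor
  · rintro ⟨k, hk, h⟩
    exact ⟨k, hk, by rw [← h]; ring⟩
  · rintro ⟨k, hk, h⟩
    exact ⟨k, hk, by rw [h]; ring⟩

lemma forms_iff {n : ℕ} {S : RootSys (EuclideanSpace ℝ (Fin n))}
    {I : Finset (EuclideanSpace ℝ (Fin n))}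
    {m : ℕ} {q : ℕ → ℕ} (hq0 : q 0 = 0)
    (hmono : ∀ s : ℕ, 1 ≤ s → s ≤ m - 1 → q (s - 1) < q s)
    (hqn : q (m - 1) ≤ n)
    {lam : HStar (EuclideanSpace ℝ (Fin n))} (c : Ctx S I (blkOf m q) (m - 1) lam)
    (β : EuclideanSpace ℝ (Fin n)) :
    (∃ i j, Good (blkOf m q) (m - 1) lam i j ∧ (β = bE i ∨ β = rt (-1) i j)) ↔
        (∃ i j s : ℕ, 1 ≤ s ∧ s < m ∧ q (s - 1) < i ∧ i ≤ q s ∧ q s ≤ q (m - 1) ∧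
          q (m - 1) < j ∧ j ≤ n ∧
          (β = stdE n i ∨ β = stdE n i + stdE n j) ∧
          (∃ k : ℤ, 0 < k ∧ lam (stdE n i) = (k : ℂ) / 2) ∧
          lam (stdE n j) = lam (stdE n i) ∧
          (∀ k : ℕ, q (s - 1) < k → k ≤ q s →
            lam (stdE n k) ≠ 0 ∧ lam (stdE n k) ≠ -lam (stdE n i))) ∨
        (∃ i j s : ℕ, 1 ≤ s ∧ s < m ∧ q (s - 1) < i ∧ i < j ∧ j ≤ q s ∧
          (β = stdE n i ∨ β = stdE n i + stdE n j) ∧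
          (∃ k : ℤ, 0 < k ∧ lam (stdE n i) = (k : ℂ)) ∧
          lam (stdE n j) = 0 ∧
          (∀ k : ℕ, q (s - 1) < k → k ≤ q s → lam (stdE n k) ≠ -lam (stdE n i)) ∧
          (∀ l : ℕ, q (m - 1) < l → l ≤ n → lam (stdE n l) ≠ lam (stdE n i))) := by
  constructor
  · rintro ⟨i, j, hg, hβ⟩
    have hne := hg.ne
    obtain ⟨hp, hmate, huniq, hneg⟩ := hg
    have hmate' := hmate
    obtain ⟨hi, hij, hc⟩ := hmate
    rw [rt_neg_one] at hβ
    have hbi := (blk_iff hq0 hmono i (s := blkOf m q i + 1) (by omega) (by omega)).mp rfl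
    have hqs : q (blkOf m q i + 1) ≤ q (m - 1) := q_mono hmono (by omega) le_rfl
    have hblk : ∀ k : ℕ, q (blkOf m q i + 1 - 1) < k → k ≤ q (blkOf m q i + 1) →
        ∃ a : Fin n, stdE n k = bE a ∧ blkOf m q a = blkOf m q i := by
      intro k h1 h2
      obtain ⟨a, rfl, ha⟩ := stdE_ex (by omega : 1 ≤ k) (by omega : k ≤ n)
      refine ⟨a, ha, ?_⟩
      have := (blk_iff hq0 hmono a (s := blkOf m q i + 1) (by omega) (by omega)).mpr ⟨h1, h2⟩
      omega
    rcases hc with ⟨hb, h0⟩ | ⟨hb, h0⟩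
    · right
      have hbj := (blk_iff hq0 hmono j (s := blkOf m q i + 1) (by omega) (by omega)).mp (by omega)
      have hlt : i < j := by
        rcases lt_or_gt_of_ne hij with h1 | h1
        · exact h1
        · exfalso
          have := c.F1 j i h1 hb
          rw [h0, zero_sub] at this
          exact hp.not_neg (by simpa [two_mul, add_comm] using this.add this)
      have hlt' : i.val < j.val := hlt
      refine ⟨i.val + 1, j.val + 1, blkOf m q i + 1, by omega, by omega, hbi.1, by omega, hbj.2,
        ?_, ?_, ?_, ?_, ?_⟩
      · rwa [stdE_succ, stdE_succ]
      · rw [stdE_succ]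
        simpa [h0, IsPosInt] using c.F1 i j hlt hb.symm
      · rwa [stdE_succ]
      · intro k h1 h2
        obtain ⟨a, ha, hab⟩ := hblk k h1 h2
        rw [ha, stdE_succ]
        exact hneg a hab
      · intro l h1 h2 hl
        obtain ⟨a, rfl, ha⟩ := stdE_ex (by omega : 1 ≤ l) h2
        have hab := (blk_last hq0 hmono a).mpr h1
        rw [ha, stdE_succ] at hl
        have := huniq a ⟨hi, by rintro rfl; omega, Or.inr ⟨hab, hl⟩⟩
        rw [this] at hab
        omega
    · left
      have hbj := (blk_last hq0 hmono j).mp hb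
      refine ⟨i.val + 1, j.val + 1, blkOf m q i + 1, by omega, by omega, hbi.1, hbi.2, hqs, hbj,
        j.2, ?_, ?_, ?_, ?_⟩
      · rwa [stdE_succ, stdE_succ]
      · rw [stdE_succ]
        exact half_iff.mp hp
      · rwa [stdE_succ, stdE_succ]
      · intro k h1 h2
        obtain ⟨a, ha, hab⟩ := hblk k h1 h2
        rw [ha, stdE_succ]
        refine ⟨fun hz => ?_, hneg a hab⟩
        have := huniq a ⟨hi, by rintro rfl; exact hne hz, Or.inl ⟨hab, hz⟩⟩
        rw [this] at hab
        omega
  · rintro (⟨i, j, s, hs1, hs2, hi1, hi2, hqs, hj1, hj2, hβ, hp, h0, hk⟩ |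
      ⟨i, j, s, hs1, hs2, hi1, hij, hj2, hβ, hp, h0, hk, hl⟩)
    · obtain ⟨a, rfl, ha⟩ := stdE_ex (by omega : 1 ≤ i) (by omega : i ≤ n)
      obtain ⟨b, rfl, hb⟩ := stdE_ex (by omega : 1 ≤ j) hj2
      have hba := (blk_iff hq0 hmono a hs1 hs2).mpr ⟨hi1, hi2⟩
      have hbb := (blk_last hq0 hmono b).mpr hj1
      have hablk : ∀ k : Fin n, blkOf m q k = blkOf m q a →
          lam (bE k) ≠ 0 ∧ lam (bE k) ≠ - lam (bE a) := by
        intro k hkb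
        have := (blk_iff hq0 hmono k hs1 hs2).mp (by omega)
        have := hk _ this.1 this.2
        rwa [stdE_succ, stdE_succ] at this
      simp only [stdE_succ] at hβ hp h0
      refine ⟨a, b, ⟨half_iff.mpr hp, ⟨by omega, by rintro rfl; omega, Or.inr ⟨hbb, h0⟩⟩, ?_,
        fun k hkb => (hablk k hkb).2⟩, by rwa [rt_neg_one]⟩
      rintro j' ⟨-, -, ⟨h1, h2⟩ | ⟨h1, h2⟩⟩
      · exact absurd h2 (hablk j' h1).1
      · exact c.inj (h1.trans hbb.symm) (h2.trans h0.symm)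
    · have hqs : q s ≤ q (m - 1) := q_mono hmono (by omega) le_rfl
      obtain ⟨a, rfl, ha⟩ := stdE_ex (by omega : 1 ≤ i) (by omega : i ≤ n)
      obtain ⟨b, rfl, hb⟩ := stdE_ex (by omega : 1 ≤ j) (by omega : j ≤ n)
      have hba := (blk_iff hq0 hmono a hs1 hs2).mpr ⟨hi1, by omega⟩
      have hbb := (blk_iff hq0 hmono b hs1 hs2).mpr ⟨by omega, hj2⟩
      have hablk : ∀ k : Fin n, blkOf m q k = blkOf m q a → lam (bE k) ≠ - lam (bE a) := by
        intro k hkb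
        have := (blk_iff hq0 hmono k hs1 hs2).mp (by omega)
        have := hk _ this.1 this.2
        rwa [stdE_succ, stdE_succ] at this
      simp only [stdE_succ] at hβ hp h0 hl
      have hp' : IsPosInt (lam (bE a)) := hp
      refine ⟨a, b, ⟨by rw [two_mul]; exact hp'.add hp',
        ⟨by omega, by rintro rfl; omega, Or.inl ⟨by omega, h0⟩⟩, ?_, hablk⟩, by rwa [rt_neg_one]⟩
      rintro j' ⟨-, -, ⟨h1, h2⟩ | ⟨h1, h2⟩⟩
      · exact c.inj (by omega) (h2.trans h0.symm)
      · exfalso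
        have := hl (j'.val + 1) ((blk_last hq0 hmono j').mp h1) j'.2
        rw [stdE_succ] at this
        exact this h2


/-- Theorem 7.5 (simplicity criterion for `B_n`, in the standard realization in `ℝ^n`):
for `λ ∈ Λ_I⁺` with `Δ \ I = {α_{q_1}, …, α_{q_{m-1}}}`,
`Σ_{β ∈ Ψ_λ⁺} θ(s_β λ) = 0` iff every `β ∈ Ψ_λ⁺⁺` is of form (1) or (2) below. -/
theorem statement_19 (n : ℕ)
    (S : RootSys (EuclideanSpace ℝ (Fin n)))
    (hΦ : (S.Φ : Set (EuclideanSpace ℝ (Fin n))) = bcdRoots BCD.B n)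
    (hpos : (S.pos : Set (EuclideanSpace ℝ (Fin n))) = bcdPos BCD.B n)
    (hΔ : (S.Δ : Set (EuclideanSpace ℝ (Fin n))) = bcdSimple BCD.B n)
    (I : Finset (EuclideanSpace ℝ (Fin n))) (hI : I ⊆ S.Δ)
    (m : ℕ) (hm : 1 ≤ m) (q : ℕ → ℕ) (hq0 : q 0 = 0)
    (hmono : ∀ s : ℕ, 1 ≤ s → s ≤ m - 1 → q (s - 1) < q s)
    (hqn : q (m - 1) ≤ n)
    (hcompl : (S.Δ : Set (EuclideanSpace ℝ (Fin n))) \ (I : Set (EuclideanSpace ℝ (Fin n))) =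
      {v | ∃ s : ℕ, 1 ≤ s ∧ s ≤ m - 1 ∧ v = bcdAlpha BCD.B n (q s)})
    (lam : HStar (EuclideanSpace ℝ (Fin n)))
    (hlam : lam ∈ LambdaP (I : Set (EuclideanSpace ℝ (Fin n)))) :
    (∑ᶠ β ∈ PsiP S (PhiI S I) (S.Φ : Set (EuclideanSpace ℝ (Fin n))) lam,
        theta S I (sRefl β lam)) = 0 ↔
      ∀ β ∈ PsiPP S (PhiI S I) (S.Φ : Set (EuclideanSpace ℝ (Fin n))) lam,
        -- (1) β = e_i or e_i + e_j with q_{s-1} < i ≤ q_s ≤ q_{m-1} < j ≤ n,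
        --     λ_i = λ_j ∈ ½ℤ_{>0} and λ_k ∉ {0, -λ_i} for q_{s-1} < k ≤ q_s
        (∃ i j s : ℕ, 1 ≤ s ∧ s < m ∧ q (s - 1) < i ∧ i ≤ q s ∧ q s ≤ q (m - 1) ∧
          q (m - 1) < j ∧ j ≤ n ∧
          (β = stdE n i ∨ β = stdE n i + stdE n j) ∧
          (∃ k : ℤ, 0 < k ∧ lam (stdE n i) = (k : ℂ) / 2) ∧
          lam (stdE n j) = lam (stdE n i) ∧
          (∀ k : ℕ, q (s - 1) < k → k ≤ q s →
            lam (stdE n k) ≠ 0 ∧ lam (stdE n k) ≠ -lam (stdE n i))) ∨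
        -- (2) β = e_i or e_i + e_j with q_{s-1} < i < j ≤ q_s, λ_i ∈ ℤ_{>0},
        --     λ_j = 0, λ_k ≠ -λ_i for q_{s-1} < k ≤ q_s and λ_l ≠ λ_i for
        --     q_{m-1} < l ≤ n
        (∃ i j s : ℕ, 1 ≤ s ∧ s < m ∧ q (s - 1) < i ∧ i < j ∧ j ≤ q s ∧
          (β = stdE n i ∨ β = stdE n i + stdE n j) ∧
          (∃ k : ℤ, 0 < k ∧ lam (stdE n i) = (k : ℂ)) ∧
          lam (stdE n j) = 0 ∧
          (∀ k : ℕ, q (s - 1) < k → k ≤ q s → lam (stdE n k) ≠ -lam (stdE n i)) ∧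
          (∀ l : ℕ, q (m - 1) < l → l ≤ n → lam (stdE n l) ≠ lam (stdE n i))) := by
  have c := ctx_of n S hΦ hpos hΔ I hI m q hmono hqn hcompl lam hlam
  rw [c.main]
  exact forall_congr' fun β => imp_congr_right fun _ => forms_iff hq0 hmono hqn c β

end JantzenGVM
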